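/- arXiv:2204.11791 — 7 statements merged into one kernel-verified Lean document; each statement's English description precedes it below -/
import Mathlib

section
/- Let C be a nondegenerate [n,k]_{q^m/q} code and let h, r be integers with 0 ≤ h < k and h ≤ r ≤ n − k + h − 1. Then d_{k−h}(C) ≥ n − r if and only if d_{r−h+1}(C^⊥) ≥ r + 2, where d_s denotes the s-th generalized rank weight. -/
open Module Submodule

noncomputable section

variable (Fq Fqm : Type) [Field Fq] [Field Fqm] [Algebra Fq Fqm]

/-- Rank weight of a vector in `Fqm^n`: the `Fq`-dimension of the span of its entries. -/
def rankWeight {n : ℕ} (v : Fin n → Fqm) : ℕ :=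
  finrank Fq (span Fq (Set.range v))

/-- Minimum rank distance of a code. -/
def minRankDist {n : ℕ} (C : Submodule Fqm (Fin n → Fqm)) : ℕ :=
  sInf {w : ℕ | ∃ v ∈ C, v ≠ 0 ∧ rankWeight Fq Fqm v = w}

/-- Dual code with respect to the standard bilinear form. -/
def dualCode {n : ℕ} (C : Submodule Fqm (Fin n → Fqm)) : Submodule Fqm (Fin n → Fqm) where
  carrier := {v | ∀ c ∈ C, ∑ i, c i * v i = 0}
  add_mem' := by
    intro a b ha hb c hc
    simp only [Set.mem_setOf_eq] at ha hb
    simp only [Pi.add_apply, mul_add, Finset.sum_add_distrib, ha c hc, hb c hc, add_zero]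
  zero_mem' := by
    intro c hc
    simp
  smul_mem' := by
    intro t a ha c hc
    simp only [Set.mem_setOf_eq] at ha
    have key : (∑ i, c i * (t • a) i) = t * ∑ i, c i * a i := by
      rw [Finset.mul_sum]
      refine Finset.sum_congr rfl fun i _ => ?_
      simp only [Pi.smul_apply, smul_eq_mul]
      ring
    simp only [Set.mem_setOf_eq, key, ha c hc, mul_zero]

/-- An `Fqm`-subspace of `Fqm^n` is Galois closed if it is stable under the componentwise
action of every element of `Gal(Fqm/Fq)`. -/
def GaloisClosed {n : ℕ} (A : Submodule Fqm (Fin n → Fqm)) : Prop :=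
  ∀ θ : Fqm ≃ₐ[Fq] Fqm, ∀ v ∈ A, (fun i => θ (v i)) ∈ A

/-- The `s`-th generalized rank weight of a code `C`. -/
def grw {n : ℕ} (C : Submodule Fqm (Fin n → Fqm)) (s : ℕ) : ℕ :=
  sInf {x : ℕ | ∃ A : Submodule Fqm (Fin n → Fqm),
    GaloisClosed Fq Fqm A ∧ s ≤ finrank Fqm ↥(A ⊓ C) ∧ finrank Fqm ↥A = x}

/-- `G` (given as the tuple of its rows) is a generator matrix for `C`. -/
def IsGenMatrix {n k : ℕ} (C : Submodule Fqm (Fin n → Fqm)) (G : Fin k → Fin n → Fqm) : Prop :=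
  C = span Fqm (Set.range G)

/-- A code is nondegenerate if the `Fq`-span of the columns of a generator matrix has
`Fq`-dimension `n`. -/
def IsNondegenerate {n : ℕ} (k : ℕ) (C : Submodule Fqm (Fin n → Fqm)) : Prop :=
  ∃ G : Fin k → Fin n → Fqm, IsGenMatrix Fqm C G ∧
    finrank Fq ↥(span Fq (Set.range fun j : Fin n => fun i : Fin k => G i j)) = n

/-- `U` is a system associated to the code `C`: `U` is the `Fq`-span of the columns of some
generator matrix of `C`. -/
def IsAssociatedSystem {n k : ℕ} (C : Submodule Fqm (Fin n → Fqm))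
    (U : Submodule Fq (Fin k → Fqm)) : Prop :=
  ∃ G : Fin k → Fin n → Fqm, IsGenMatrix Fqm C G ∧
    U = span Fq (Set.range fun j : Fin n => fun i : Fin k => G i j)

/-- `U` is an `[n,k]` system: an `n`-dimensional `Fq`-subspace of `Fqm^k` whose
`Fqm`-span is everything. -/
def IsSystem {k : ℕ} (n : ℕ) (U : Submodule Fq (Fin k → Fqm)) : Prop :=
  finrank Fq ↥U = n ∧ span Fqm (U : Set (Fin k → Fqm)) = ⊤

/-- `U` is `(h,r)`-evasive: every `h`-dimensional `Fqm`-subspace meets `U` in `Fq`-dimension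
at most `r`. -/
def IsEvasive {k : ℕ} (U : Submodule Fq (Fin k → Fqm)) (h r : ℕ) : Prop :=
  ∀ W : Submodule Fqm (Fin k → Fqm), finrank Fqm ↥W = h →
    finrank Fq ↥(U ⊓ W.restrictScalars Fq) ≤ r

/-- A `k`-dimensional code `C ⊆ Fqm^n` is near MRD if `d₁(C) = n-k` and `dₛ(C) = n-k+s`
for all `2 ≤ s ≤ k`. -/
def IsNearMRD {n : ℕ} (k : ℕ) (C : Submodule Fqm (Fin n → Fqm)) : Prop :=
  grw Fq Fqm C 1 = n - k ∧ ∀ s : ℕ, 2 ≤ s → s ≤ k → grw Fq Fqm C s = n - k + s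

lemma dual_eq_orth {n : ℕ} (C : Submodule Fqm (Fin n → Fqm)) :
    dualCode Fqm C = LinearMap.BilinForm.orthogonal
      (Matrix.toBilin' (1 : Matrix (Fin n) (Fin n) Fqm)) C := by
  ext v
  simp only [LinearMap.BilinForm.mem_orthogonal_iff,
    Matrix.toBilin'_apply', Matrix.one_mulVec]
  rfl

lemma finrank_dual {n : ℕ} (C : Submodule Fqm (Fin n → Fqm)) :
    finrank Fqm (dualCode Fqm C) + finrank Fqm C = n := by
  have h1 : (Matrix.toBilin' (1 : Matrix (Fin n) (Fin n) Fqm)).Nondegenerate := by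
    apply LinearMap.BilinForm.nondegenerate_toBilin'_of_det_ne_zero'
    simp
  have h2 : (Matrix.toBilin' (1 : Matrix (Fin n) (Fin n) Fqm)).IsRefl := by
    intro x y hxy
    simp only [Matrix.toBilin'_apply', Matrix.one_mulVec] at hxy ⊢
    rw [dotProduct_comm]; exact hxy
  have h3 := LinearMap.BilinForm.finrank_orthogonal h1 C
  have h4 := Submodule.finrank_le C
  rw [← dual_eq_orth] at h3
  simp at h3 h4
  omega

lemma dual_dual {n : ℕ} (C : Submodule Fqm (Fin n → Fqm)) :
    dualCode Fqm (dualCode Fqm C) = C := by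
  symm
  apply Submodule.eq_of_le_of_finrank_eq
  · intro v hv c hc
    have := hc v hv
    simpa only [mul_comm] using this
  · have h1 := finrank_dual Fqm C
    have h2 := finrank_dual Fqm (dualCode Fqm C)
    omega

lemma dual_sup {n : ℕ} (A C : Submodule Fqm (Fin n → Fqm)) :
    dualCode Fqm (A ⊔ C) = dualCode Fqm A ⊓ dualCode Fqm C := by
  ext v
  constructor
  · intro hv
    exact ⟨fun c hc => hv c (Submodule.mem_sup_left hc),
      fun c hc => hv c (Submodule.mem_sup_right hc)⟩
  · rintro ⟨h1, h2⟩ c hc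
    obtain ⟨a, ha, b, hb, rfl⟩ := Submodule.mem_sup.1 hc
    simp only [Pi.add_apply, add_mul, Finset.sum_add_distrib]
    rw [h1 a ha, h2 b hb, add_zero]

lemma finrank_dual_inf {n : ℕ} (A C : Submodule Fqm (Fin n → Fqm)) :
    finrank Fqm ↥(dualCode Fqm A ⊓ dualCode Fqm C) + finrank Fqm A + finrank Fqm C
      = n + finrank Fqm ↥(A ⊓ C) := by
  rw [← dual_sup]
  have h1 := finrank_dual Fqm (A ⊔ C)
  have h2 := Submodule.finrank_sup_add_finrank_inf_eq A C
  omega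

lemma galoisClosed_dual {n : ℕ} {A : Submodule Fqm (Fin n → Fqm)}
    (hA : GaloisClosed Fq Fqm A) : GaloisClosed Fq Fqm (dualCode Fqm A) := by
  intro θ v hv c hc
  have h1 := congrArg θ (hv _ (hA θ.symm c hc))
  simpa using h1

lemma galoisClosed_succ {n : ℕ} {A : Submodule Fqm (Fin n → Fqm)}
    (hA : GaloisClosed Fq Fqm A) (hlt : finrank Fqm A < n) :
    ∃ B, A ≤ B ∧ GaloisClosed Fq Fqm B ∧ finrank Fqm B = finrank Fqm A + 1 := by
  have h1 : ∃ i : Fin n, (Pi.single i 1 : Fin n → Fqm) ∉ A := by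
    by_contra! hall
    have : A = ⊤ := by
      rw [eq_top_iff, ← (Pi.basisFun Fqm (Fin n)).span_eq, Submodule.span_le]
      rintro _ ⟨i, rfl⟩
      simpa using hall i
    subst this
    simp at hlt
  obtain ⟨i, hi⟩ := h1
  refine ⟨A ⊔ span Fqm {Pi.single i 1}, le_sup_left, ?_, ?_⟩
  · intro θ v hv
    obtain ⟨a, ha, b, hb, rfl⟩ := Submodule.mem_sup.1 hv
    obtain ⟨t, rfl⟩ := Submodule.mem_span_singleton.1 hb
    refine Submodule.mem_sup.2 ⟨_, hA θ a ha, θ t • Pi.single i 1,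
      Submodule.smul_mem _ _ (Submodule.mem_span_singleton_self _), ?_⟩
    ext j
    by_cases hj : j = i
    · subst hj; simp
    · simp [Pi.single_apply, hj]
  · have h2 := Submodule.finrank_sup_add_finrank_inf_eq A (span Fqm {(Pi.single i 1 : Fin n → Fqm)})
    have h3 : A ⊓ span Fqm {(Pi.single i 1 : Fin n → Fqm)} = ⊥ := by
      rw [eq_bot_iff]
      rintro x ⟨hx, hx2⟩
      obtain ⟨t, rfl⟩ := Submodule.mem_span_singleton.1 hx2
      by_cases ht : t = 0
      · simp [ht]
      · exact absurd ((Submodule.smul_mem_iff A ht).1 hx) hi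
    have h4 : (Pi.single i 1 : Fin n → Fqm) ≠ 0 := by
      rintro h0; exact hi (h0 ▸ A.zero_mem)
    rw [h3, finrank_bot, finrank_span_singleton h4] at h2
    exact h2

lemma galoisClosed_extend {n : ℕ} {A : Submodule Fqm (Fin n → Fqm)}
    (hA : GaloisClosed Fq Fqm A) (d : ℕ) (hd : finrank Fqm A + d ≤ n) :
    ∃ B, A ≤ B ∧ GaloisClosed Fq Fqm B ∧ finrank Fqm B = finrank Fqm A + d := by
  induction d with
  | zero => exact ⟨A, le_rfl, hA, rfl⟩
  | succ d ih =>
    obtain ⟨B, h1, h2, h3⟩ := ih (by omega)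
    obtain ⟨B', h4, h5, h6⟩ := galoisClosed_succ Fq Fqm h2 (by omega)
    exact ⟨B', h1.trans h4, h5, by omega⟩

lemma le_grw_iff {n : ℕ} (C : Submodule Fqm (Fin n → Fqm)) (s x : ℕ)
    (hs : s ≤ finrank Fqm C) (hx : x + 1 ≤ n) :
    x + 1 ≤ grw Fq Fqm C s ↔ ∀ A : Submodule Fqm (Fin n → Fqm),
      GaloisClosed Fq Fqm A → finrank Fqm A = x → finrank Fqm ↥(A ⊓ C) < s := by
  constructor
  · intro h A hA hAx
    by_contra! hc
    have : grw Fq Fqm C s ≤ x := Nat.sInf_le ⟨A, hA, hc, hAx⟩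
    omega
  · intro h
    refine le_csInf ⟨_, ⊤, fun _ _ _ => trivial, by rw [top_inf_eq]; exact hs, rfl⟩ ?_
    rintro _ ⟨A, hA, hsA, rfl⟩
    by_contra! hc
    obtain ⟨B, h1, h2, h3⟩ := galoisClosed_extend Fq Fqm hA (x - finrank Fqm A) (by omega)
    have h4 := h B h2 (by omega)
    have h5 := Submodule.finrank_mono (inf_le_inf_right C h1)
    omega

/-- `d_{k-h}(C) ≥ n - r` iff `d_{r-h+1}(C^⊥) ≥ r + 2`. -/
theorem stmt1 [Fintype Fq] (n k h r : ℕ) (hk1 : 1 ≤ k) (hkn : k ≤ n)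
    (hhk : h < k) (hhr : h ≤ r) (hrub : r + k + 1 ≤ n + h)
    (C : Submodule Fqm (Fin n → Fqm)) (hdim : finrank Fqm ↥C = k)
    (hnd : IsNondegenerate Fq Fqm k C) :
    n - r ≤ grw Fq Fqm C (k - h) ↔ r + 2 ≤ grw Fq Fqm (dualCode Fqm C) (r - h + 1) := by
  have hd := finrank_dual Fqm C
  have e1 : n - r = (n - r - 1) + 1 := by omega
  rw [e1, le_grw_iff Fq Fqm C _ _ (by omega) (by omega),
    le_grw_iff Fq Fqm (dualCode Fqm C) (r - h + 1) (r + 1) (by omega) (by omega)]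
  constructor
  · intro H B hB hBr
    have h0 := finrank_dual Fqm B
    have h1 := H _ (galoisClosed_dual Fq Fqm hB) (by omega)
    have h2 := finrank_dual_inf Fqm (dualCode Fqm B) C
    rw [dual_dual] at h2
    omega
  · intro H A hA hAr
    have h0 := finrank_dual Fqm A
    have h1 := H _ (galoisClosed_dual Fq Fqm hA) (by omega)
    have h2 := finrank_dual_inf Fqm A C
    omega
end
end

section
/- Assume k ≥ 2 and km is even. Then for every integer n with k ≤ n ≤ km/2 there exists a nondegenerate [n,k]_{q^m/q} code that is (k−1)-MRD, i.e., satisfies d_{k−1}(C) = n − 1. -/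
open Module Submodule

noncomputable section

variable (Fq Fqm : Type) [Field Fq] [Field Fqm] [Algebra Fq Fqm]

/-- Scattered `Q`-subspace of a `K`-space. -/
def Scat {Q : Type} (K : Type) {V : Type} [Field Q] [Field K] [Algebra Q K] [AddCommGroup V]
    [Module Q V] [Module K V] (U : Submodule Q V) : Prop :=
  ∀ u ∈ U, u ≠ 0 → ∀ l : K, l • u ∈ U → ∃ c : Q, algebraMap Q K c = l

lemma finrank_dualCode {K : Type} [Field K] {n : ℕ} (C : Submodule K (Fin n → K)) :
    finrank K ↥(dualCode K C) + finrank K ↥C = n := by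
  have h := Subspace.finrank_add_finrank_dualAnnihilator_eq C
  rw [finrank_fin_fun] at h
  let e : (Fin n → K) ≃ₗ[K] Module.Dual K (Fin n → K) :=
    (Pi.basisFun K (Fin n)).toDualEquiv
  have he : ∀ v w : Fin n → K, e v w = ∑ i, w i * v i := by
    intro v w
    simp only [e, Basis.toDualEquiv_apply]
    conv_lhs => rw [← (Pi.basisFun K (Fin n)).sum_repr w]
    rw [map_sum]
    refine Finset.sum_congr rfl fun i _ => ?_
    rw [map_smul, Basis.toDual_apply_left]
    simp
  have hm : (dualCode K C).map (e : (Fin n → K) →ₗ[K] _) = C.dualAnnihilator := by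
    ext φ
    simp only [Submodule.mem_map, Submodule.mem_dualAnnihilator]
    constructor
    · rintro ⟨v, hv, rfl⟩ w hw
      exact (he v w).trans (hv w hw)
    · intro hφ
      refine ⟨e.symm φ, fun c hc => ?_, by simp⟩
      rw [← he, e.apply_symm_apply]
      exact hφ c hc
  have := LinearEquiv.finrank_map_eq e (dualCode K C)
  rw [hm] at this
  omega

lemma galois_rational {Q K : Type} [Field Q] [Fintype Q] [Field K] [Algebra Q K]
    [FiniteDimensional Q K] {n : ℕ} (B : Submodule K (Fin n → K)) (hB : GaloisClosed Q K B)
    (b : Fin n → K) (hb : b ∈ B) (hb0 : b ≠ 0) :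
    ∃ h : Fin n → Q, h ≠ 0 ∧ (fun i => algebraMap Q K (h i)) ∈ B ∧
      ∀ i, b i = 0 → h i = 0 := by
  have : Finite K := Module.finite_of_finite Q
  obtain ⟨j, hj⟩ := Function.ne_iff.mp hb0
  have hnd := traceForm_nondegenerate Q K
  have : ∃ l : K, Algebra.trace Q K (l * b j) ≠ 0 := by
    by_contra hcon
    push Not at hcon
    apply hj
    apply hnd.1
    intro y
    rw [Algebra.traceForm_apply, mul_comm]
    exact hcon y
  obtain ⟨l, hl⟩ := this
  refine ⟨fun i => Algebra.trace Q K (l * b i), fun h0 => hl (congrFun h0 j), ?_, ?_⟩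
  · have : (fun i => algebraMap Q K (Algebra.trace Q K (l * b i))) =
        ∑ θ : K ≃ₐ[Q] K, (fun i => θ ((l • b) i)) := by
      ext i
      rw [trace_eq_sum_automorphisms]
      simp
    rw [this]
    exact Submodule.sum_mem _ fun θ _ => hB θ _ (B.smul_mem l hb)
  · intro i hi
    simp [hi]

lemma galois_two {Q K : Type} [Field Q] [Fintype Q] [Field K] [Algebra Q K]
    [FiniteDimensional Q K] {n : ℕ} (B : Submodule K (Fin n → K)) (hB : GaloisClosed Q K B)
    (h2 : 2 ≤ finrank K ↥B) :
    ∃ h : Fin 2 → Fin n → Q, LinearIndependent Q h ∧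
      ∀ a, (fun i => algebraMap Q K (h a i)) ∈ B := by
  have hne : B ≠ ⊥ := by
    rintro rfl
    simp at h2
  obtain ⟨b, hb, hb0⟩ := (Submodule.ne_bot_iff _).mp hne
  obtain ⟨h1, h10, h1B, -⟩ := galois_rational B hB b hb hb0
  obtain ⟨j, hj⟩ := Function.ne_iff.mp h10
  have hj' : algebraMap Q K (h1 j) ≠ 0 := by
    simpa using hj
  set h1' : Fin n → K := fun i => algebraMap Q K (h1 i) with hh1'
  have : ∃ c ∈ B, c ∉ span K {h1'} := by
    by_contra hcon
    push Not at hcon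
    have := Submodule.finrank_mono (show B ≤ span K {h1'} from hcon)
    have h3 := finrank_span_le_card (R := K) ({h1'} : Set (Fin n → K))
    simp at h3
    omega
  obtain ⟨c, hc, hcs⟩ := this
  obtain ⟨h2, h20, h2B, h2z⟩ := galois_rational B hB (c - (c j / h1' j) • h1')
    (B.sub_mem hc (B.smul_mem _ h1B)) (fun h0 => hcs (by
      rw [sub_eq_zero.mp h0]
      exact Submodule.smul_mem _ _ (Submodule.mem_span_singleton_self _)))
  have h2j : h2 j = 0 := h2z j (by
    simp only [Pi.sub_apply, Pi.smul_apply, smul_eq_mul]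
    rw [div_mul_cancel₀ _ hj', sub_self])
  refine ⟨![h1, h2], ?_, ?_⟩
  · rw [LinearIndependent.pair_iff]
    intro s t hst
    have hs : s = 0 := by
      have := congrFun hst j
      simpa [h2j, show h1 j ≠ 0 from hj] using this
    subst hs
    refine ⟨rfl, ?_⟩
    simpa [h20] using hst
  · intro a
    fin_cases a
    · exact h1B
    · exact h2B

lemma dual_galois {Q K : Type} [Field Q] [Field K] [Algebra Q K] {n : ℕ}
    (A : Submodule K (Fin n → K)) (hA : GaloisClosed Q K A) : GaloisClosed Q K (dualCode K A) := by
  intro θ v hv c hc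
  have h1 := hv _ (hA θ.symm c hc)
  have h2 := congrArg θ h1
  simpa using h2

lemma codePart {Q K : Type} [Field Q] [Fintype Q] [Field K] [Algebra Q K]
    [FiniteDimensional Q K] {n k : ℕ} (hk : 2 ≤ k) (hkn : k ≤ n) (U : Submodule Q (Fin k → K))
    (hU : Scat K U) (hn : finrank Q ↥U = n) (hs : span K (U : Set (Fin k → K)) = ⊤) :
    ∃ C : Submodule K (Fin n → K), finrank K ↥C = k ∧
      IsNondegenerate Q K k C ∧ grw Q K C (k - 1) = n - 1 := by
  let b : Basis (Fin n) Q ↥U := finBasisOfFinrankEq Q U hn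
  let M : Matrix (Fin k) (Fin n) K := fun i j => (b j : Fin k → K) i
  have hcol : span Q (Set.range fun j : Fin n => fun i : Fin k => M i j) = U := by
    have : (fun j : Fin n => fun i : Fin k => M i j) = fun j => U.subtype (b j) := rfl
    rw [this, Set.range_comp' U.subtype b, Submodule.span_image, b.span_eq]
    simp
  have hcolK : span K (Set.range fun j : Fin n => fun i : Fin k => M i j) = ⊤ := by
    rw [eq_top_iff, ← hs, Submodule.span_le]
    intro u hu
    rw [← hcol] at hu
    exact Submodule.span_subset_span Q K _ hu
  have hrank : finrank K ↥(span K (Set.range M)) = k := by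
    have h1 := M.rank_eq_finrank_span_row
    have h2 := M.rank_eq_finrank_span_cols
    have h3 : finrank K ↥(span K (Set.range M.col)) = k := by
      have : span K (Set.range M.col) = ⊤ := hcolK
      rw [this, finrank_top, finrank_fin_fun]
    change finrank K ↥(span K (Set.range M.row)) = k
    omega
  have hli : LinearIndependent K M := by
    rw [linearIndependent_iff_card_eq_finrank_span]
    simpa [Set.finrank] using hrank.symm
  have hmem : ∀ v ∈ span K (Set.range M), ∃ c : Fin k → K, v = Matrix.vecMul c M := by
    intro v hv
    rw [Submodule.mem_span_range_iff_exists_fun] at hv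
    obtain ⟨c, rfl⟩ := hv
    refine ⟨c, ?_⟩
    rw [Matrix.vecMul_eq_sum]
  refine ⟨span K (Set.range M), hrank, ⟨M, rfl, by rw [hcol, hn]⟩, ?_⟩
  unfold grw
  have hnpos : 0 < n := by omega
  have : NeZero n := ⟨by omega⟩
  apply le_antisymm
  · apply Nat.sInf_le
    let A : Submodule K (Fin n → K) := LinearMap.ker (LinearMap.proj (0 : Fin n) : (Fin n → K) →ₗ[K] K)
    have hAd : finrank K ↥A = n - 1 := by
      have h1 := LinearMap.finrank_range_add_finrank_ker
        (LinearMap.proj (0 : Fin n) : (Fin n → K) →ₗ[K] K)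
      have h2 : LinearMap.range (LinearMap.proj (0 : Fin n) : (Fin n → K) →ₗ[K] K) = ⊤ :=
        LinearMap.range_eq_top.mpr (LinearMap.proj_surjective _)
      rw [h2, finrank_top, finrank_self, finrank_fin_fun] at h1
      change finrank K ↥(LinearMap.ker _) = _
      omega
    refine ⟨A, ?_, ?_, hAd⟩
    · intro θ v hv
      have : v 0 = 0 := hv
      change θ (v 0) = 0
      simp [this]
    · have h1 := Submodule.finrank_sup_add_finrank_inf_eq A (span K (Set.range M))
      have h2 := Submodule.finrank_le (A ⊔ span K (Set.range M))
      rw [finrank_fin_fun] at h2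
      omega
  · apply le_csInf
    · exact ⟨_, ⊤, fun _ _ _ => trivial, by rw [top_inf_eq, hrank]; omega, rfl⟩
    rintro x ⟨A, hA, hAk, rfl⟩
    by_contra hlt
    have hd := finrank_dualCode A
    obtain ⟨h, hli2, hh⟩ := galois_two (dualCode K A) (dual_galois A hA) (by omega)
    let u : Fin 2 → ↥U := fun a => ∑ j, h a j • b j
    have hu : LinearIndependent Q u := by
      have : u = fun a => b.equivFun.symm (h a) := by
        ext a
        simp [u, Basis.equivFun_symm_apply]
      rw [this]
      exact hli2.map' (b.equivFun.symm : (Fin n → Q) →ₗ[Q] ↥U) (LinearEquiv.ker _)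
    let w : Fin 2 → Fin k → K := fun a => (u a : Fin k → K)
    have hw : LinearIndependent K w := by
      have hu0 : w 0 ≠ 0 := fun h0 => hu.ne_zero 0 (Subtype.ext h0)
      have e1 : w = ![w 0, w 1] := by ext a; fin_cases a <;> rfl
      have e2 : u = ![u 0, u 1] := by ext1 a; fin_cases a <;> rfl
      rw [e1, LinearIndependent.pair_iff' hu0]
      have hu00 := hu.ne_zero 0
      rw [e2, LinearIndependent.pair_iff' hu00] at hu
      intro l hl
      obtain ⟨c, rfl⟩ := hU (w 0) (u 0).2 hu0 l (by rw [hl]; exact (u 1).2)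
      refine hu c (Subtype.ext ?_)
      rw [algebraMap_smul] at hl
      exact hl
    have hwM : ∀ a, w a = M.mulVec (fun j => algebraMap Q K (h a j)) := by
      intro a
      ext i
      simp [w, u, Matrix.mulVec, dotProduct, M, Algebra.smul_def, mul_comm]
    have hle : A ⊓ span K (Set.range M) ≤
        (dualCode K (span K (Set.range w))).map M.vecMulLinear := by
      rintro v ⟨hvA, hvC⟩
      obtain ⟨c, rfl⟩ := hmem v hvC
      refine ⟨c, ?_, rfl⟩
      intro y hy
      have hgoal : dotProduct y c = 0 := by
        induction hy using Submodule.span_induction with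
        | mem y hy =>
          obtain ⟨a, rfl⟩ := hy
          have := hh a _ hvA
          change dotProduct (Matrix.vecMul c M) _ = 0 at this
          rw [← Matrix.dotProduct_mulVec, ← hwM, dotProduct_comm] at this
          exact this
        | zero => simp
        | add x y _ _ hx hy => rw [add_dotProduct, hx, hy, add_zero]
        | smul t x _ hx => rw [smul_dotProduct, hx, smul_zero]
      exact hgoal
    have h1 := Submodule.finrank_mono hle
    have h2 := Submodule.finrank_map_le M.vecMulLinear (dualCode K (span K (Set.range w)))
    have h3 := finrank_dualCode (span K (Set.range w))
    have h4 := finrank_span_eq_card hw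
    simp at h4
    omega

lemma frob_fixed {Q K : Type} [Field Q] [Fintype Q] [Field K] [Algebra Q K]
    [FiniteDimensional Q K] (x : K) (hx : x ^ Fintype.card Q = x) :
    ∃ c : Q, algebraMap Q K c = x := by
  have : Finite K := Module.finite_of_finite Q
  have h : x ∈ (⊥ : IntermediateField Q K) := by
    rw [IsGalois.mem_bot_iff_fixed]
    intro g
    obtain ⟨n, rfl⟩ := (FiniteField.bijective_frobeniusAlgEquivOfAlgebraic_pow Q K).2 g
    have hf : Function.IsFixedPt (FiniteField.frobeniusAlgEquivOfAlgebraic Q K) x := by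
      change _ = x
      simpa using hx
    simp only [AlgEquiv.coe_pow]
    exact hf.iterate _
  rwa [IntermediateField.mem_bot] at h

lemma exists_sub_between {Q V : Type} [Field Q] [AddCommGroup V] [Module Q V] [FiniteDimensional Q V]
    (S U : Submodule Q V) (hSU : S ≤ U) (n : ℕ) (h1 : finrank Q ↥S ≤ n) (h2 : n ≤ finrank Q ↥U) :
    ∃ T : Submodule Q V, S ≤ T ∧ T ≤ U ∧ finrank Q ↥T = n := by
  induction n, h1 using Nat.le_induction with
  | base => exact ⟨S, le_rfl, hSU, rfl⟩
  | succ i hi ih =>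
    obtain ⟨T, hST, hTU, hT⟩ := ih (by omega)
    have : ∃ u ∈ U, u ∉ T := by
      by_contra hcon
      push Not at hcon
      have := Submodule.finrank_mono (show U ≤ T from hcon)
      omega
    obtain ⟨u, hu, huT⟩ := this
    refine ⟨T ⊔ span Q {u}, hST.trans le_sup_left, sup_le hTU (by simpa using hu), ?_⟩
    have hlt : T < T ⊔ span Q {u} := by
      refine lt_of_le_of_ne le_sup_left fun h => huT ?_
      rw [h]
      exact Submodule.mem_sup_right (Submodule.mem_span_singleton_self u)
    have h3 := Submodule.finrank_lt_finrank_of_lt hlt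
    have h4 := Submodule.finrank_add_le_finrank_add_finrank T (span Q {u})
    have h5 := finrank_span_le_card (R := Q) ({u} : Set V)
    simp at h5
    omega

/-- Existence of a spanning scattered subspace of dimension `N` in `K^k`. -/
def HasS (Q K : Type) [Field Q] [Field K] [Algebra Q K] (k N : ℕ) : Prop :=
  ∃ U : Submodule Q (Fin k → K), Scat K U ∧ finrank Q ↥U = N ∧
    span K (U : Set (Fin k → K)) = ⊤

lemma hasS_shrink {Q K : Type} [Field Q] [Field K] [Algebra Q K] [FiniteDimensional Q K]
    {k N n : ℕ} (h : HasS Q K k N) (h1 : k ≤ n) (h2 : n ≤ N) : HasS Q K k n := by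
  obtain ⟨U, hU, hN, hs⟩ := h
  obtain ⟨b, hbU, hbs, hb⟩ := exists_linearIndependent K (U : Set (Fin k → K))
  have hbf : Finite b := hb.finite
  have := Fintype.ofFinite b
  have hcard : Fintype.card b = k := by
    have h3 := finrank_span_eq_card hb
    rw [Subtype.range_coe, hbs, hs, finrank_top, finrank_fin_fun] at h3
    exact h3.symm
  have hbQ : LinearIndependent Q ((↑) : b → Fin k → K) := hb.restrict_scalars' Q
  have h4 := finrank_span_eq_card hbQ
  rw [Subtype.range_coe, hcard] at h4
  obtain ⟨T, hST, hTU, hT⟩ := exists_sub_between (span Q b) U (Submodule.span_le.mpr hbU) n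
    (by omega) (by omega)
  refine ⟨T, fun u hu hu0 l hl => hU u (hTU hu) hu0 l (hTU hl), hT, ?_⟩
  rw [eq_top_iff, ← hs, ← hbs, Submodule.span_le]
  intro x hx
  exact Submodule.subset_span (hST (Submodule.subset_span hx))

lemma hasS_of_equiv {Q K V : Type} [Field Q] [Field K] [Algebra Q K] [FiniteDimensional Q K]
    [AddCommGroup V] [Module Q V] [Module K V] [IsScalarTower Q K V] [FiniteDimensional K V]
    {k N : ℕ} (hV : finrank K V = k)
    (U : Submodule Q V) (hU : Scat K U) (hN : finrank Q ↥U = N) (hs : span K (U : Set V) = ⊤) :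
    HasS Q K k N := by
  let e : V ≃ₗ[K] (Fin k → K) := LinearEquiv.ofFinrankEq _ _ (by rw [hV, finrank_fin_fun])
  refine ⟨U.map (e.restrictScalars Q : V →ₗ[Q] (Fin k → K)), ?_, ?_, ?_⟩
  · rintro _ ⟨u, hu, rfl⟩ hu0 l ⟨v, hv, hvl⟩
    refine hU u hu (fun h => hu0 (by simp [h])) l ?_
    have : v = l • u := e.injective (by simpa using hvl)
    exact this ▸ hv
  · rw [← hN]
    exact LinearEquiv.finrank_map_eq (e.restrictScalars Q) U
  · have : ((U.map (e.restrictScalars Q : V →ₗ[Q] (Fin k → K)) : Submodule Q _) : Set (Fin k → K))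
        = (e : V →ₗ[K] (Fin k → K)) '' (U : Set V) := rfl
    rw [this, Submodule.span_image, hs, Submodule.map_top, LinearEquiv.range]

lemma hasS_add {Q K : Type} [Field Q] [Field K] [Algebra Q K] [FiniteDimensional Q K]
    {k₁ k₂ N₁ N₂ : ℕ} (h1 : HasS Q K k₁ N₁) (h2 : HasS Q K k₂ N₂) :
    HasS Q K (k₁ + k₂) (N₁ + N₂) := by
  obtain ⟨U, hU, hN, hs⟩ := h1
  obtain ⟨U', hU', hN', hs'⟩ := h2
  refine hasS_of_equiv (V := (Fin k₁ → K) × (Fin k₂ → K)) (by simp) (U.prod U') ?_ ?_ ?_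
  · rintro ⟨u, v⟩ ⟨hu, hv⟩ h0 l ⟨hlu, hlv⟩
    by_cases hu0 : u = 0
    · exact hU' v hv (fun hv0 => h0 (by simp [hu0, hv0])) l hlv
    · exact hU u hu hu0 l hlu
  · rw [← hN, ← hN', ← finrank_prod]
    let e : ↥(U.prod U') ≃ₗ[Q] ↥U × ↥U' :=
      { toFun := fun x => (⟨x.1.1, x.2.1⟩, ⟨x.1.2, x.2.2⟩)
        invFun := fun x => ⟨(x.1.1, x.2.1), ⟨x.1.2, x.2.2⟩⟩
        map_add' := fun _ _ => rfl
        map_smul' := fun _ _ => rfl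
        left_inv := fun _ => rfl
        right_inv := fun _ => rfl }
    exact e.finrank_eq
  · rw [eq_top_iff]
    have a1 : ∀ u, ((u, 0) : (Fin k₁ → K) × (Fin k₂ → K)) ∈ span K ((U.prod U' : Submodule Q _) : Set ((Fin k₁ → K) × (Fin k₂ → K))) := by
      intro u
      have hu : u ∈ span K (U : Set _) := hs ▸ trivial
      have := Submodule.mem_map_of_mem (f := LinearMap.inl K (Fin k₁ → K) (Fin k₂ → K)) hu
      rw [← Submodule.span_image] at this
      refine Submodule.span_mono ?_ this
      rintro _ ⟨w, hw, rfl⟩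
      exact ⟨hw, U'.zero_mem⟩
    have a2 : ∀ u, ((0, u) : (Fin k₁ → K) × (Fin k₂ → K)) ∈ span K ((U.prod U' : Submodule Q _) : Set ((Fin k₁ → K) × (Fin k₂ → K))) := by
      intro u
      have hu : u ∈ span K (U' : Set _) := hs' ▸ trivial
      have := Submodule.mem_map_of_mem (f := LinearMap.inr K (Fin k₁ → K) (Fin k₂ → K)) hu
      rw [← Submodule.span_image] at this
      refine Submodule.span_mono ?_ this
      rintro _ ⟨w, hw, rfl⟩
      exact ⟨U.zero_mem, hw⟩
    rintro ⟨u, v⟩ -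
    have := Submodule.add_mem _ (a1 u) (a2 v)
    simpa using this

lemma hasS_two {Q K : Type} [Field Q] [Fintype Q] [Field K] [Algebra Q K]
    [FiniteDimensional Q K] (hm : 2 ≤ finrank Q K) : HasS Q K 2 (finrank Q K) := by
  let φ := FiniteField.frobeniusAlgHom Q K
  have hφ : ∀ x, φ x = x → ∃ c : Q, algebraMap Q K c = x := fun x hx => frob_fixed x hx
  let g : K →ₗ[Q] K × K := LinearMap.prod LinearMap.id φ.toLinearMap
  have hg : ∀ x, g x = (x, φ x) := fun x => rfl
  have hginj : Function.Injective g := fun x y h => congrArg Prod.fst h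
  refine hasS_of_equiv (V := K × K) (by simp) (LinearMap.range g) ?_ ?_ ?_
  · rintro _ ⟨x, rfl⟩ hx0 l ⟨y, hy⟩
    have hx : x ≠ 0 := by
      rintro rfl
      exact hx0 (map_zero g)
    rw [hg, hg, Prod.smul_mk, Prod.mk.injEq, smul_eq_mul, smul_eq_mul] at hy
    obtain ⟨rfl, h2⟩ := hy
    rw [map_mul] at h2
    exact hφ l (mul_right_cancel₀ (by simpa using hx) h2)
  · exact LinearMap.finrank_range_of_inj hginj
  · have : ∃ x : K, φ x ≠ x := by
      by_contra hcon
      push Not at hcon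
      have h1 : Function.Surjective (Algebra.linearMap Q K) := fun x => hφ x (hcon x)
      have h2 := LinearMap.finrank_range_of_inj
        (f := Algebra.linearMap Q K) (algebraMap Q K).injective
      rw [LinearMap.range_eq_top.mpr h1, finrank_top, finrank_self] at h2
      omega
    obtain ⟨x, hx⟩ := this
    have hd : φ x - x ≠ 0 := sub_ne_zero.mpr hx
    set S := span K ((LinearMap.range g : Submodule Q (K × K)) : Set (K × K))
    have m1 : ((1, 1) : K × K) ∈ S := Submodule.subset_span ⟨1, by simp [hg]⟩
    have m2 : ((x, φ x) : K × K) ∈ S := Submodule.subset_span ⟨x, rfl⟩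
    have m3 : ((0, 1) : K × K) ∈ S := by
      have := S.smul_mem (φ x - x)⁻¹ (S.sub_mem m2 (S.smul_mem x m1))
      simpa [hd] using this
    rw [eq_top_iff]
    rintro ⟨u, v⟩ -
    have := S.add_mem (S.smul_mem u m1) (S.smul_mem (v - u) m3)
    simpa using this

lemma hasS_even {Q K : Type} [Field Q] [Fintype Q] [Field K] [Algebra Q K]
    [FiniteDimensional Q K] (hm : 2 ≤ finrank Q K) (j : ℕ) :
    HasS Q K (2 * (j + 1)) ((j + 1) * finrank Q K) := by
  induction j with
  | zero => simpa using hasS_two hm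
  | succ j ih =>
    have := hasS_add ih (hasS_two hm)
    rw [show 2 * (j + 1 + 1) = 2 * (j + 1) + 2 by ring, add_mul, one_mul]
    exact this

lemma hasS_std {Q K : Type} [Field Q] [Field K] [Algebra Q K]
    [FiniteDimensional Q K] (k : ℕ) : HasS Q K k k := by
  let g : (Fin k → Q) →ₗ[Q] (Fin k → K) := (Algebra.linearMap Q K).compLeft (Fin k)
  have hg : ∀ x i, g x i = algebraMap Q K (x i) := fun x i => rfl
  have hginj : Function.Injective g := by
    intro x y h
    ext i
    exact (algebraMap Q K).injective (congrFun h i)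
  refine ⟨LinearMap.range g, ?_, ?_, ?_⟩
  · rintro _ ⟨x, rfl⟩ hx0 l ⟨y, hy⟩
    obtain ⟨i, hi⟩ := Function.ne_iff.mp hx0
    have hi' : algebraMap Q K (x i) ≠ 0 := hi
    have := congrFun hy i
    rw [Pi.smul_apply, hg, hg, smul_eq_mul] at this
    refine ⟨y i / x i, ?_⟩
    rw [map_div₀, this, mul_div_cancel_right₀ _ hi']
  · rw [LinearMap.finrank_range_of_inj hginj, finrank_fin_fun]
  · rw [eq_top_iff, ← (Pi.basisFun K (Fin k)).span_eq, Submodule.span_le]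
    rintro _ ⟨i, rfl⟩
    refine Submodule.subset_span ⟨Pi.single i 1, ?_⟩
    ext j
    rw [hg]
    by_cases h : j = i
    · subst h; simp
    · simp [h]

lemma quad_basis {F K : Type} [Field F] [Field K] [Algebra F K] (h2 : finrank F K = 2) :
    ∃ w : K, (∀ z : K, ∃ a b : F, z = algebraMap F K a + algebraMap F K b * w) ∧
      (∀ a b c d : F, algebraMap F K a + algebraMap F K b * w =
        algebraMap F K c + algebraMap F K d * w → a = c ∧ b = d) := by
  have hex : ∃ w : K, ∀ a : F, algebraMap F K a ≠ w := by
    by_contra hcon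
    push Not at hcon
    have h2' := LinearMap.finrank_range_of_inj
      (f := Algebra.linearMap F K) (algebraMap F K).injective
    rw [LinearMap.range_eq_top.mpr (show Function.Surjective (Algebra.linearMap F K) from hcon),
      finrank_top, finrank_self] at h2'
    omega
  obtain ⟨w, hw⟩ := hex
  have hli : LinearIndependent F ![(1 : K), w] := by
    rw [LinearIndependent.pair_iff' one_ne_zero]
    intro a ha
    exact hw a (by rw [← ha, Algebra.smul_def, mul_one])
  have hsp := hli.span_eq_top_of_card_eq_finrank (by simp [h2])
  refine ⟨w, fun z => ?_, fun a b c d h => ?_⟩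
  · have hz : z ∈ span F (Set.range ![(1 : K), w]) := hsp ▸ trivial
    rw [Matrix.range_cons, Matrix.range_cons, Matrix.range_empty, Set.union_empty,
      Set.singleton_union, Submodule.mem_span_pair] at hz
    obtain ⟨a, b, rfl⟩ := hz
    exact ⟨a, b, by simp [Algebra.smul_def]⟩
  · rw [LinearIndependent.pair_iff] at hli
    have := hli (a - c) (b - d) (by
      simp only [Algebra.smul_def, map_sub]
      linear_combination h)
    exact ⟨sub_eq_zero.mp this.1, sub_eq_zero.mp this.2⟩

lemma lemmaA {Q F K : Type} [Field Q] [Fintype Q] [Field F] [Field K] [Algebra Q F] [Algebra F K]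
    [Algebra Q K] [IsScalarTower Q F K] [FiniteDimensional Q K] [FiniteDimensional Q F]
    (h2 : finrank F K = 2) (s : F → F) (f : (Fin 3 → F) →ₗ[Q] (Fin 3 → F))
    (hf : ∀ (c : F) x, f (c • x) = s c • f x)
    (hs : ∀ c : F, s c = c → ∃ d : Q, algebraMap Q F d = c) (hne : ∃ c, s c ≠ c)
    (hsimp : ∀ W : Submodule F (Fin 3 → F), (∀ x ∈ W, f x ∈ W) → W = ⊥ ∨ W = ⊤) :
    HasS Q K 3 (3 * finrank Q F) := by
  have : Finite F := Module.finite_of_finite Q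
  obtain ⟨w, hw1, hw2⟩ := quad_basis h2
  -- no small stable span
  have hspan : ∀ x : Fin 3 → F, x ≠ 0 → ∀ a b : F, f (f x) ≠ a • x + b • f x := by
    intro x hx a b hab
    have hst : ∀ y ∈ span F ({x, f x} : Set (Fin 3 → F)), f y ∈ span F {x, f x} := by
      intro y hy
      rw [Submodule.mem_span_pair] at hy
      obtain ⟨p, r, rfl⟩ := hy
      rw [map_add, hf, hf, hab, Submodule.mem_span_pair]
      exact ⟨s r * a, s p + s r * b, by module⟩
    rcases hsimp _ hst with h | h
    · exact hx (by
        have : x ∈ span F ({x, f x} : Set (Fin 3 → F)) := Submodule.subset_span (by simp)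
        rw [h] at this
        simpa using this)
    · have h3 := finrank_range_le_card (R := F) ![x, f x]
      rw [Set.finrank, Matrix.range_cons, Matrix.range_cons, Matrix.range_empty, Set.union_empty,
        Set.singleton_union, h, finrank_top, finrank_fin_fun, Fintype.card_fin] at h3
      omega
  have hfinj : Function.Injective f := by
    rw [injective_iff_map_eq_zero]
    intro x hx
    by_contra hx0
    exact hspan x hx0 0 0 (by simp [hx])
  have hfsurj : Function.Surjective f := Finite.surjective_of_injective hfinj
  let ι : (Fin 3 → F) →ₗ[Q] (Fin 3 → K) :=
    ((Algebra.linearMap F K).restrictScalars Q).compLeft (Fin 3)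
  have hι : ∀ x i, ι x i = algebraMap F K (x i) := fun _ _ => rfl
  let g : (Fin 3 → F) →ₗ[Q] (Fin 3 → K) := ι ∘ₗ f + (LinearMap.lsmul K (Fin 3 → K) w).restrictScalars Q ∘ₗ ι
  have hg : ∀ x i, g x i = algebraMap F K (f x i) + algebraMap F K (x i) * w := by
    intro x i
    simp [g, hι, mul_comm]
  have hginj : Function.Injective g := by
    intro x y h
    ext i
    have := congrFun h i
    rw [hg, hg] at this
    exact (hw2 _ _ _ _ this).2
  refine ⟨LinearMap.range g, ?_, ?_, ?_⟩
  · rintro _ ⟨x, rfl⟩ hx0 l ⟨y, hy⟩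
    have hx : x ≠ 0 := by
      rintro rfl
      exact hx0 (map_zero g)
    obtain ⟨α, β, rfl⟩ := hw1 l
    obtain ⟨B, A, hAB⟩ := hw1 (w * w)
    have hcoord : ∀ i, f y i = α * f x i + β * B * x i ∧ y i = α * x i + β * f x i + A * β * x i := by
      intro i
      have := congrFun hy i
      rw [Pi.smul_apply, smul_eq_mul, hg, hg] at this
      apply hw2
      rw [this]
      simp only [map_add, map_mul]
      linear_combination (algebraMap F K β * algebraMap F K (x i)) * hAB
    have e1 : f y = α • f x + (β * B) • x := by
      ext i
      simpa using (hcoord i).1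
    have e2 : y = (α + A * β) • x + β • f x := by
      ext i
      have := (hcoord i).2
      simp only [Pi.add_apply, Pi.smul_apply, smul_eq_mul]
      linear_combination this
    by_cases hβ : β = 0
    · subst hβ
      simp only [mul_zero, zero_mul, add_zero, zero_smul] at e1 e2
      rw [e2, hf] at e1
      have hfx : f x ≠ 0 := fun h0 => hx (hfinj (by rw [h0, map_zero]))
      obtain ⟨d, rfl⟩ := hs α (smul_left_injective F hfx e1)
      exact ⟨d, by simp [← IsScalarTower.algebraMap_apply]⟩
    · exfalso
      have hsβ : s β ≠ 0 := by
        intro h0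
        have h5 := hf β x
        rw [h0, zero_smul] at h5
        have h6 : β • x = 0 := hfinj (by rw [h5, map_zero])
        exact (smul_ne_zero hβ hx) h6
      rw [e2, map_add, hf, hf] at e1
      refine hspan x hx ((s β)⁻¹ * (β * B)) ((s β)⁻¹ * (α - s (α + A * β))) ?_
      have : s β • f (f x) = (β * B) • x + (α - s (α + A * β)) • f x := by
        rw [sub_smul, ← sub_eq_zero]
        rw [← sub_eq_zero] at e1
        rw [← e1]
        abel
      rw [mul_smul (s β)⁻¹ (β * B), mul_smul (s β)⁻¹ (α - _), ← smul_add, ← this, smul_smul, inv_mul_cancel₀ hsβ, one_smul]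
  · rw [LinearMap.finrank_range_of_inj hginj, finrank_pi_fintype]
    simp
  · set S := span K ((LinearMap.range g : Submodule Q (Fin 3 → K)) : Set (Fin 3 → K)) with hS
    have hgS : ∀ x, g x ∈ S := fun x => Submodule.subset_span ⟨x, rfl⟩
    obtain ⟨c, hc⟩ := hne
    have hd : algebraMap F K (s c - c) ≠ 0 := by
      simpa [sub_eq_zero] using hc
    have hιS : ∀ x, ι x ∈ S := by
      intro x
      obtain ⟨y, rfl⟩ := hfsurj x
      have := S.smul_mem (algebraMap F K (s c - c))⁻¹
        (S.sub_mem (hgS (c • y)) (S.smul_mem (algebraMap F K c) (hgS y)))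
      convert this using 1
      ext i
      simp only [Pi.smul_apply, Pi.sub_apply, smul_eq_mul, hg, hι, hf, map_mul]
      rw [eq_inv_mul_iff_mul_eq₀ hd, map_sub]
      ring
    rw [eq_top_iff, ← (Pi.basisFun K (Fin 3)).span_eq, Submodule.span_le]
    rintro _ ⟨i, rfl⟩
    have : (Pi.basisFun K (Fin 3)) i = ι (Pi.single i 1) := by
      ext j
      rw [hι]
      by_cases h : j = i
      · subst h; simp
      · simp [h]
    rw [this]
    exact hιS _

lemma gen_pow {E : Type} [Field E] [Finite E] (q r : ℕ) (hq : 2 ≤ q)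
    (hr : r * (q ^ 3 - 1) + 1 = Nat.card E) :
    ∃ δ : E, δ ≠ 0 ∧ (δ ^ r) ^ q ≠ δ ^ r ∧ (δ ^ r) ^ (q ^ 2) ≠ δ ^ r := by
  obtain ⟨g, hg⟩ := IsCyclic.exists_generator (α := Eˣ)
  have hcard : orderOf g = r * (q ^ 3 - 1) := by
    rw [orderOf_eq_card_of_forall_mem_zpowers hg, Nat.card_units]
    omega
  have hq3 : q ^ 2 < q ^ 3 := Nat.pow_lt_pow_right (by omega) (by omega)
  have hq2 : q ≤ q ^ 2 := Nat.le_self_pow (by omega) q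
  have hE : 1 < Nat.card E := Finite.one_lt_card
  have hr0 : r ≠ 0 := by
    rintro rfl
    omega
  have hord : orderOf (g ^ r) = q ^ 3 - 1 := by
    rw [orderOf_pow_of_dvd hr0 (by rw [hcard]; exact dvd_mul_right _ _), hcard]
    exact Nat.mul_div_cancel_left _ (by omega)
  have key : ∀ a : ℕ, 2 ≤ a → a < q ^ 3 → ((g : E) ^ r) ^ a ≠ (g : E) ^ r := by
    intro a ha ha3 h
    have h1 : (g ^ r) ^ a = g ^ r := by
      ext
      push_cast
      exact h
    have h2 : (g ^ r) ^ (a - 1) = 1 := by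
      have : (g ^ r) ^ (a - 1) * g ^ r = 1 * g ^ r := by
        rw [← pow_succ, Nat.sub_add_cancel (by omega), h1, one_mul]
      exact mul_right_cancel this
    have h3 := Nat.le_of_dvd (by omega) (orderOf_dvd_of_pow_eq_one h2)
    omega
  exact ⟨g, g.ne_zero, key q hq (by omega), key _ (by omega) hq3⟩

lemma ne_of_fixed {Q F : Type} [Field Q] [Field F] [Algebra Q F]
    (ht : 2 ≤ finrank Q F) (s : F → F)
    (hs : ∀ c : F, s c = c → ∃ d : Q, algebraMap Q F d = c) : ∃ c, s c ≠ c := by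
  by_contra hcon
  push Not at hcon
  have h1 : Function.Surjective (Algebra.linearMap Q F) := fun x => hs x (hcon x)
  have h2 := LinearMap.finrank_range_of_inj
    (f := Algebra.linearMap Q F) (algebraMap Q F).injective
  rw [LinearMap.range_eq_top.mpr h1, finrank_top, finrank_self] at h2
  omega

lemma iter_mem {F V : Type} [Field F] [AddCommGroup V] [Module F V] (W : Submodule F V)
    (f : V → V) (h : ∀ x ∈ W, f x ∈ W) (i : ℕ) : ∀ x ∈ W, f^[i] x ∈ W := by
  induction i with
  | zero => exact fun x hx => hx
  | succ i ih =>
    intro x hx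
    rw [Function.iterate_succ_apply]
    exact ih _ (h x hx)

set_option maxHeartbeats 1000000 in
lemma case_dvd {Q F K : Type} [Field Q] [Fintype Q] [Field F] [Field K] [Algebra Q F] [Algebra F K]
    [Algebra Q K] [IsScalarTower Q F K] [FiniteDimensional Q K] [FiniteDimensional Q F]
    (h2 : finrank F K = 2) (j : ℕ) (hj : finrank Q F = 3 * j) :
    HasS Q K 3 (3 * finrank Q F) := by
  have : Finite F := Module.finite_of_finite Q
  have htpos : 0 < finrank Q F := finrank_pos
  let φ := FiniteField.frobeniusAlgHom Q F
  set q := Fintype.card Q with hqdef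
  have hq : 2 ≤ q := Fintype.one_lt_card
  have hφ : ∀ x, φ x = x ^ q := fun x => rfl
  have hcardF : Nat.card F = q ^ (3 * j) := by
    rw [Module.natCard_eq_pow_finrank (K := Q), hj, Nat.card_eq_fintype_card]
  let f : F → (Fin 3 → F) →ₗ[Q] (Fin 3 → F) := fun δ =>
    { toFun := fun x => ![δ * φ (x 2), φ (x 0), φ (x 1)]
      map_add' := by
        intro x y
        ext c
        fin_cases c <;> simp [mul_add]
      map_smul' := by
        intro a x
        ext c
        fin_cases c <;> simp }
  have hf3 : ∀ δ x (c : Fin 3), (f δ)^[3] x c = δ ^ (q ^ (c : ℕ)) * x c ^ (q ^ 3) := by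
    intro δ x c
    change (f δ (f δ (f δ x))) c = _
    fin_cases c <;> simp [f, hφ] <;> first | (left; ring) | ring
  have hiter : ∀ i : ℕ, ∃ r : ℕ, r * (q ^ 3 - 1) + 1 = q ^ (3 * i) ∧
      ∀ δ x (c : Fin 3), (f δ)^[3 * i] x c = (δ ^ r) ^ (q ^ (c : ℕ)) * x c ^ (q ^ (3 * i)) := by
    intro i
    induction i with
    | zero => exact ⟨0, by simp, by simp⟩
    | succ i ih =>
      obtain ⟨r, hr, hx⟩ := ih
      refine ⟨1 + q ^ 3 * r, ?_, ?_⟩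
      · obtain ⟨p, hp⟩ : ∃ p, q ^ 3 = p + 1 := ⟨q ^ 3 - 1, by
          have : 0 < q ^ 3 := by positivity
          omega⟩
        rw [mul_add, pow_add, ← hr, mul_one, hp, Nat.add_sub_cancel]
        ring
      · intro δ x c
        rw [show 3 * (i + 1) = 3 + 3 * i by ring, Function.iterate_add_apply, hf3, hx]
        ring
  obtain ⟨r, hr, hfr⟩ := hiter j
  obtain ⟨δ, hδ0, hδ1, hδ2⟩ := gen_pow (E := F) q r hq (by rw [hcardF, hr])
  have hs : ∀ c : F, φ c = c → ∃ d : Q, algebraMap Q F d = c := fun c hc => frob_fixed c hc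
  have hFc : ∀ x : F, x ^ (q ^ (3 * j)) = x := by
    intro x
    have := Fintype.ofFinite F
    rw [← hcardF, Nat.card_eq_fintype_card]
    exact FiniteField.pow_card x
  refine lemmaA h2 φ (f δ) ?_ hs (ne_of_fixed (by omega) φ hs) ?_
  · intro c x
    ext i
    fin_cases i
    · simp [f]; ring
    · simp [f]
    · simp [f]
  · intro W hW
    by_cases hbot : W = ⊥
    · exact Or.inl hbot
    right
    obtain ⟨x, hx, hx0⟩ := (Submodule.ne_bot_iff _).mp hbot
    set η := δ ^ r
    let ev : Fin 3 → F := fun c => η ^ (q ^ (c : ℕ))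
    have hD : ∀ y ∈ W, (fun c => ev c * y c) ∈ W := by
      intro y hy
      have := iter_mem W (f δ) hW (3 * j) y hy
      convert this using 1
      ext c
      rw [hfr, hFc]
    have h01 : ev 0 ≠ ev 1 := by simpa [ev] using hδ1.symm
    have h02 : ev 0 ≠ ev 2 := by simpa [ev] using hδ2.symm
    have h12 : ev 1 ≠ ev 2 := by
      intro h
      have h' : φ (ev 0) = φ (ev 1) := by
        rw [hφ, hφ]
        simp only [ev] at h ⊢
        convert h using 1
        · simp
        · simp [pow_two, pow_mul]
      exact h01 (φ.toRingHom.injective h')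
    have hD2 : ∀ a b : F, ∀ y ∈ W, (fun c => (ev c - a) * ((ev c - b) * y c)) ∈ W := by
      have : ∀ a : F, ∀ y ∈ W, (fun c => (ev c - a) * y c) ∈ W := by
        intro a y hy
        have := W.sub_mem (hD y hy) (W.smul_mem a hy)
        convert this using 1
        ext c
        simp [sub_mul]
      intro a b y hy
      exact this a _ (this b y hy)
    have hsingle : ∃ c, Pi.single c 1 ∈ W := by
      have hgo : ∀ c a b : Fin 3, c ≠ a → c ≠ b → (∀ d, d = a ∨ d = b ∨ d = c) →
          ev c ≠ ev a → ev c ≠ ev b → x c ≠ 0 → Pi.single c (1 : F) ∈ W := by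
        intro c a b hca hcb hall h1 h2 hxc
        have hne : (ev c - ev a) * ((ev c - ev b) * x c) ≠ 0 :=
          mul_ne_zero (sub_ne_zero.mpr h1) (mul_ne_zero (sub_ne_zero.mpr h2) hxc)
        have := W.smul_mem ((ev c - ev a) * ((ev c - ev b) * x c))⁻¹ (hD2 (ev a) (ev b) x hx)
        convert this using 1
        ext d
        rw [Pi.smul_apply, smul_eq_mul]
        rcases hall d with rfl | rfl | rfl
        · simp [hca.symm]
        · simp [hcb.symm]
        · rw [inv_mul_cancel₀ hne]; simp
      obtain ⟨c, hc⟩ := Function.ne_iff.mp hx0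
      fin_cases c
      · exact ⟨0, hgo 0 1 2 (by decide) (by decide) (by decide) h01 h02 hc⟩
      · exact ⟨1, hgo 1 0 2 (by decide) (by decide) (by decide) h01.symm h12 hc⟩
      · exact ⟨2, hgo 2 0 1 (by decide) (by decide) (by decide) h02.symm h12.symm hc⟩
    have s01 : Pi.single 0 1 ∈ W → Pi.single 1 1 ∈ W := by
      intro h
      have := hW _ h
      convert this using 1
      ext d
      fin_cases d <;> simp [f]
    have s12 : Pi.single 1 1 ∈ W → Pi.single 2 1 ∈ W := by
      intro h
      have := hW _ h
      convert this using 1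
      ext d
      fin_cases d <;> simp [f]
    have s20 : Pi.single 2 1 ∈ W → Pi.single 0 1 ∈ W := by
      intro h
      have := W.smul_mem δ⁻¹ (hW _ h)
      convert this using 1
      ext d
      fin_cases d <;> simp [f, hδ0]
    have hall : ∀ c, Pi.single c (1 : F) ∈ W := by
      obtain ⟨c, hc⟩ := hsingle
      have h0 : Pi.single (0 : Fin 3) (1 : F) ∈ W := by
        fin_cases c
        · exact hc
        · exact s20 (s12 hc)
        · exact s20 hc
      intro d
      fin_cases d
      · exact h0
      · exact s01 h0
      · exact s12 (s01 h0)
    rw [eq_top_iff, ← (Pi.basisFun F (Fin 3)).span_eq, Submodule.span_le]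
    rintro _ ⟨i, rfl⟩
    simpa using hall i

lemma exists_cubic {F : Type} [Field F] [Finite F] :
    ∃ (E : Type) (_ : Field E) (_ : Algebra F E), finrank F E = 3 := by
  obtain ⟨p, hp⟩ := CharP.exists F
  have : Fact p.Prime := ⟨CharP.char_is_prime F p⟩
  exact ⟨FiniteField.Extension F p 3, inferInstance, inferInstance,
    FiniteField.finrank_extension F p 3⟩

lemma case_not_dvd {Q F K : Type} [Field Q] [Fintype Q] [Field F] [Field K] [Algebra Q F]
    [Algebra F K]
    [Algebra Q K] [IsScalarTower Q F K] [FiniteDimensional Q K] [FiniteDimensional Q F]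
    (h2 : finrank F K = 2) (ht : 2 ≤ finrank Q F) (h3 : ¬ 3 ∣ finrank Q F) :
    HasS Q K 3 (3 * finrank Q F) := by
  have : Finite F := Module.finite_of_finite Q
  obtain ⟨E, _, _, hE⟩ := exists_cubic (F := F)
  let : Algebra Q E := ((algebraMap F E).comp (algebraMap Q F)).toAlgebra
  have : IsScalarTower Q F E := IsScalarTower.of_algebraMap_eq' rfl
  have : FiniteDimensional F E := FiniteDimensional.of_finrank_pos (by omega)
  have : Finite E := Module.finite_of_finite F
  set t := finrank Q F with htdef
  let φ := FiniteField.frobeniusAlgHom Q E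
  set q := Fintype.card Q with hqdef
  have hq : 2 ≤ q := Fintype.one_lt_card
  have hφ : ∀ x, φ x = x ^ q := fun x => rfl
  have hφ3 : ∀ x, φ (φ (φ x)) = x ^ (q ^ 3) := fun x => by rw [hφ, hφ, hφ]; ring
  have hcardF : Nat.card F = q ^ t := by
    rw [Module.natCard_eq_pow_finrank (K := Q), Nat.card_eq_fintype_card]
  have hcardE : Nat.card E = q ^ (3 * t) := by
    rw [Module.natCard_eq_pow_finrank (K := F), hE, hcardF, ← pow_mul, mul_comm]
  have hEc : ∀ x : E, x ^ (q ^ (3 * t)) = x := by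
    intro x
    have := Fintype.ofFinite E
    rw [← hcardE, Nat.card_eq_fintype_card]
    exact FiniteField.pow_card x
  have hFc : ∀ x : F, x ^ (q ^ t) = x := by
    intro x
    have := Fintype.ofFinite F
    rw [← hcardF, Nat.card_eq_fintype_card]
    exact FiniteField.pow_card x
  have hF3 : ∀ x : F, x ^ (q ^ 3) = x → x ^ q = x := by
    intro x hx
    have p1 : Function.IsPeriodicPt (fun y : F => y ^ q) 3 x := by
      change (fun y : F => y ^ q)^[3] x = x
      rw [pow_iterate]; exact hx
    have p2 : Function.IsPeriodicPt (fun y : F => y ^ q) t x := by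
      change (fun y : F => y ^ q)^[t] x = x
      rw [pow_iterate]; exact hFc x
    have p3 := p1.gcd p2
    rw [(Nat.Prime.coprime_iff_not_dvd Nat.prime_three).mpr h3] at p3
    exact p3
  let f : E → E →ₗ[Q] E := fun a =>
    { toFun := fun x => a * φ (φ (φ x))
      map_add' := fun x y => by simp [mul_add]
      map_smul' := fun c x => by simp }
  have hfa : ∀ a x, f a x = a * x ^ (q ^ 3) := fun a x => by rw [← hφ3]; rfl
  have hiter : ∀ i : ℕ, ∃ r : ℕ, r * (q ^ 3 - 1) + 1 = q ^ (3 * i) ∧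
      ∀ a x, (f a)^[i] x = a ^ r * x ^ (q ^ (3 * i)) := by
    intro i
    induction i with
    | zero => exact ⟨0, by simp, by simp⟩
    | succ i ih =>
      obtain ⟨r, hr, hx⟩ := ih
      refine ⟨1 + q ^ 3 * r, ?_, ?_⟩
      · obtain ⟨p, hp⟩ : ∃ p, q ^ 3 = p + 1 := ⟨q ^ 3 - 1, by
          have : 0 < q ^ 3 := by positivity
          omega⟩
        rw [mul_add, pow_add, ← hr, mul_one, hp, Nat.add_sub_cancel]
        ring
      · intro a x
        rw [Function.iterate_succ_apply', hfa, hx]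
        ring
  obtain ⟨r, hr, hfr⟩ := hiter t
  obtain ⟨a, ha0, ha1, -⟩ := gen_pow (E := E) q r hq (by rw [hcardE, hr])
  set η := a ^ r with hη
  have hη3 : η ^ (q ^ 3) = η := by
    have h5 : η ^ (q ^ 3 - 1) = 1 := by
      have h6 : a ^ (r * (q ^ 3 - 1)) * a = 1 * a := by
        rw [← pow_succ, hr, hEc, one_mul]
      rw [hη, ← pow_mul]
      exact mul_right_cancel₀ ha0 h6
    have : 0 < q ^ 3 := by positivity
    rw [show q ^ 3 = (q ^ 3 - 1) + 1 by omega, pow_succ, h5, one_mul]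
  have hηF : ∀ c : F, algebraMap F E c ≠ η := by
    intro c hc
    have h5 : c ^ (q ^ 3) = c := (algebraMap F E).injective (by rw [map_pow, hc, hη3])
    apply ha1
    rw [← hc, ← map_pow, hF3 c h5]
  let e : E ≃ₗ[F] (Fin 3 → F) := LinearEquiv.ofFinrankEq _ _ (by rw [hE, finrank_fin_fun])
  have hs : ∀ c : F, c ^ (q ^ 3) = c → ∃ d : Q, algebraMap Q F d = c :=
    fun c hc => frob_fixed c (hF3 c hc)
  refine lemmaA h2 (fun c => c ^ (q ^ 3))
    ((e.restrictScalars Q : E →ₗ[Q] (Fin 3 → F)) ∘ₗ f a ∘ₗ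
      ((e.restrictScalars Q).symm : (Fin 3 → F) →ₗ[Q] E)) ?_ hs (ne_of_fixed ht _ hs) ?_
  · intro c x
    change e (f a (e.symm (c • x))) = c ^ (q ^ 3) • e (f a (e.symm x))
    rw [← map_smul, map_smul, hfa, hfa]
    congr 1
    simp only [Algebra.smul_def, map_pow]
    ring
  · intro W hW
    by_cases hbot : W = ⊥
    · exact Or.inl hbot
    right
    obtain ⟨x, hx, hx0⟩ := (Submodule.ne_bot_iff _).mp hbot
    let W' : Submodule F E := W.comap (e : E →ₗ[F] (Fin 3 → F))
    have hW' : ∀ y ∈ W', f a y ∈ W' := by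
      intro y hy
      have := hW (e y) hy
      change e (f a (e.symm (e y))) ∈ W at this
      rwa [e.symm_apply_apply] at this
    let A : Subalgebra F E :=
      { carrier := {z | ∀ y ∈ W', z * y ∈ W'}
        mul_mem' := fun {z z'} hz hz' y hy => by
          rw [mul_assoc]
          exact hz _ (hz' y hy)
        add_mem' := fun {z z'} hz hz' y hy => by
          rw [add_mul]
          exact W'.add_mem (hz y hy) (hz' y hy)
        algebraMap_mem' := fun c y hy => by
          rw [← Algebra.smul_def]
          exact W'.smul_mem c hy }
    have hηA : η ∈ A := by
      intro y hy
      have := iter_mem W' (f a) hW' t y hy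
      rwa [hfr, hEc] at this
    have hsimple : IsSimpleOrder (Subalgebra F E) :=
      Subalgebra.isSimpleOrder_of_finrank_prime F E (by rw [hE]; exact Nat.prime_three)
    have hA : A = ⊤ := by
      rcases hsimple.eq_bot_or_eq_top A with h | h
      · rw [h, Algebra.mem_bot] at hηA
        obtain ⟨c, hc⟩ := hηA
        exact absurd hc (hηF c)
      · exact h
    rw [eq_top_iff]
    intro y _
    have hex : e.symm x ≠ 0 := by simpa using hx0
    have hzA : e.symm y / e.symm x ∈ A := hA ▸ trivial
    have := hzA (e.symm x) (by change e (e.symm x) ∈ W; simpa using hx)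
    rw [div_mul_cancel₀ _ hex] at this
    change e (e.symm y) ∈ W at this
    simpa using this

lemma hasS_three {Q K : Type} [Field Q] [Fintype Q] [Field K] [Algebra Q K]
    [FiniteDimensional Q K] (t : ℕ) (ht : finrank Q K = 2 * t) : HasS Q K 3 (3 * t) := by
  have : Finite K := Module.finite_of_finite Q
  have hpos : 0 < finrank Q K := finrank_pos
  by_cases h1 : t = 1
  · subst h1
    exact hasS_std 3
  have : Fact (Nat.Prime 2) := ⟨Nat.prime_two⟩
  obtain ⟨g, hg⟩ := exists_prime_orderOf_dvd_card' (G := K ≃ₐ[Q] K) 2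
    (by rw [IsGalois.card_aut_eq_finrank, ht]; exact dvd_mul_right _ _)
  let F := IntermediateField.fixedField (Subgroup.zpowers g)
  have h2 : finrank F K = 2 := by
    rw [IntermediateField.finrank_fixedField_eq_card, Nat.card_zpowers, hg]
  have h3 := finrank_mul_finrank Q F K
  have hF : finrank Q F = t := by
    rw [h2] at h3
    omega
  rw [← hF]
  by_cases hd : 3 ∣ finrank Q F
  · obtain ⟨j, hj⟩ := hd
    exact case_dvd h2 j hj
  · exact case_not_dvd h2 (by omega) hd

/-- if `km` is even, for every `k ≤ n ≤ km/2` there is a nondegenerate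
`[n,k]` code which is `(k-1)`-MRD. -/
theorem stmt4 [Fintype Fq] (m k : ℕ) (hm : finrank Fq Fqm = m) (hk : 2 ≤ k)
    (heven : Even (k * m)) (n : ℕ) (hkn : k ≤ n) (hn : 2 * n ≤ k * m) :
    ∃ C : Submodule Fqm (Fin n → Fqm), finrank Fqm ↥C = k ∧
      IsNondegenerate Fq Fqm k C ∧ grw Fq Fqm C (k - 1) = n - 1 := by
  have hk0 : 0 < k * m := by omega
  have hm0 : 0 < m := Nat.pos_of_mul_pos_left hk0
  have : FiniteDimensional Fq Fqm := FiniteDimensional.of_finrank_pos (by omega)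
  have hm2 : 2 ≤ finrank Fq Fqm := by
    by_contra h
    have : m = 1 := by omega
    subst this
    omega
  have key : ∃ N, HasS Fq Fqm k N ∧ n ≤ N := by
    rcases Nat.even_or_odd' k with ⟨j, rfl | rfl⟩
    · obtain ⟨i, rfl⟩ : ∃ i, j = i + 1 := ⟨j - 1, by omega⟩
      refine ⟨_, hasS_even hm2 i, ?_⟩
      rw [hm]
      nlinarith
    · have hme : Even m := by
        rcases Nat.even_mul.mp heven with h | h
        · exact absurd h (by simp)
        · exact h
      obtain ⟨t, ht⟩ := hme
      have h3 := hasS_three (Q := Fq) (K := Fqm) t (by omega)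
      obtain ⟨i, rfl⟩ : ∃ i, j = i + 1 := ⟨j - 1, by omega⟩
      cases i with
      | zero => exact ⟨_, h3, by omega⟩
      | succ i =>
        refine ⟨3 * t + (i + 1) * finrank Fq Fqm, ?_, ?_⟩
        · rw [show 2 * (i + 1 + 1) + 1 = 3 + 2 * (i + 1) by ring]
          exact hasS_add h3 (hasS_even hm2 i)
        · rw [hm, ht]
          rw [ht] at hn
          nlinarith
  obtain ⟨N, hN, hnN⟩ := key
  obtain ⟨U, hU, hUn, hs⟩ := hasS_shrink hN hkn hnN
  exact codePart hk hkn U hU hUn hs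
end
end

section
/- Let 0 < k < n, let C be a nondegenerate [n,k]_{q^m/q} code with d(C) ≥ 2, let U be a system associated to C and let U' be a system associated to C^⊥ (the rank-metric dual of U). Let h, r be integers with 0 ≤ h < k and h ≤ r ≤ n − k + h − 1. Then U is (h,r)-evasive if and only if U' is (n−k−r+h−1, n−r−2)-evasive. -/
open Module Submodule

noncomputable section

variable (Fq Fqm : Type) [Field Fq] [Field Fqm] [Algebra Fq Fqm]

theorem aux_shrink {K V : Type} [Field K] [AddCommGroup V] [Module K V] [FiniteDimensional K V]
    (A : Submodule K V) (t : ℕ) (ht : t ≤ finrank K A) :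
    ∃ T : Submodule K V, T ≤ A ∧ finrank K T = t := by
  obtain ⟨f, hf⟩ := exists_linearIndependent_of_le_finrank ht
  refine ⟨span K (Set.range fun i => (f i : V)), ?_, ?_⟩
  · rw [span_le]; rintro _ ⟨i, rfl⟩; exact (f i).2
  · have : LinearIndependent K (fun i => (f i : V)) :=
      hf.map' A.subtype (ker_subtype A)
    rw [finrank_span_eq_card this]; simp

theorem aux_extend {K V : Type} [Field K] [AddCommGroup V] [Module K V] [FiniteDimensional K V]
    (A : Submodule K V) (t : ℕ) (hA : finrank K A ≤ t) (ht : t ≤ finrank K V) :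
    ∃ T : Submodule K V, A ≤ T ∧ finrank K T = t := by
  obtain ⟨Q, hQ⟩ := A.exists_isCompl
  have h1 := finrank_add_eq_of_isCompl hQ
  obtain ⟨S, hS, hSt⟩ := aux_shrink Q (t - finrank K A) (by omega)
  refine ⟨A ⊔ S, le_sup_left, ?_⟩
  have h2 := finrank_sup_add_finrank_inf_eq A S
  have h3 : A ⊓ S = ⊥ := by
    rw [eq_bot_iff, ← hQ.inf_eq_bot]; exact inf_le_inf_left _ hS
  rw [h3, finrank_bot] at h2
  omega

def auxB (K : Type) [Field K] (n : ℕ) : LinearMap.BilinForm K (Fin n → K) :=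
  dotProductBilin K K

theorem auxB_refl (K : Type) [Field K] (n : ℕ) : (auxB K n).IsRefl := by
  intro x y h
  simp only [auxB, dotProductBilin_apply_apply] at h ⊢
  rw [dotProduct_comm]; exact h

theorem auxB_nd (K : Type) [Field K] (n : ℕ) : (auxB K n).Nondegenerate := by
  constructor
  · intro x h; exact dotProduct_eq_zero x h
  · intro x h; exact dotProduct_eq_zero x fun w => by rw [dotProduct_comm]; exact h w

theorem aux_dual_eq (K : Type) [Field K] {n : ℕ} (C : Submodule K (Fin n → K)) :
    dualCode K C = (auxB K n).orthogonal C := by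
  ext v; rfl

theorem aux_dual_finrank (K : Type) [Field K] {n : ℕ} (C : Submodule K (Fin n → K)) :
    finrank K C + finrank K (dualCode K C) = n := by
  have h := LinearMap.BilinForm.finrank_orthogonal (auxB_nd K n) C
  rw [← aux_dual_eq, finrank_fin_fun] at h
  have := finrank_le C
  rw [finrank_fin_fun] at this
  omega

theorem aux_dual_dual (K : Type) [Field K] {n : ℕ} (C : Submodule K (Fin n → K)) :
    dualCode K (dualCode K C) = C := by
  rw [aux_dual_eq, aux_dual_eq]
  exact LinearMap.BilinForm.orthogonal_orthogonal (auxB_nd K n) (auxB_refl K n) C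

theorem aux_dual_sup (K : Type) [Field K] {n : ℕ} (C D : Submodule K (Fin n → K)) :
    dualCode K (C ⊔ D) = dualCode K C ⊓ dualCode K D := by
  ext v
  constructor
  · intro h
    exact ⟨fun c hc => h c (mem_sup_left hc), fun c hc => h c (mem_sup_right hc)⟩
  · rintro ⟨h1, h2⟩ c hc
    obtain ⟨a, ha, b, hb, rfl⟩ := mem_sup.1 hc
    simp only [Pi.add_apply, add_mul, Finset.sum_add_distrib, h1 a ha, h2 b hb, add_zero]

def auxI (K L : Type) [Field K] [Field L] [Algebra K L] (n : ℕ) :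
    (Fin n → K) →ₗ[K] (Fin n → L) :=
  (Algebra.linearMap K L).compLeft (Fin n)

def auxExt (K L : Type) [Field K] [Field L] [Algebra K L] {n : ℕ}
    (T : Submodule K (Fin n → K)) : Submodule L (Fin n → L) :=
  span L (T.map (auxI K L n) : Set (Fin n → L))

theorem auxI_apply (K L : Type) [Field K] [Field L] [Algebra K L] {n : ℕ} (x : Fin n → K)
    (i : Fin n) : auxI K L n x i = algebraMap K L (x i) := rfl

theorem auxExt_finrank_le (K L : Type) [Field K] [Field L] [Algebra K L] {n : ℕ}
    (T : Submodule K (Fin n → K)) : finrank L (auxExt K L T) ≤ finrank K T := by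
  set b := finBasis K T
  have : auxExt K L T ≤ span L (Set.range fun i => auxI K L n (b i : Fin n → K)) := by
    unfold auxExt
    rw [span_le]
    rintro _ ⟨x, hx, rfl⟩
    have hr := b.sum_repr ⟨x, hx⟩
    have hr2 : x = ∑ i, b.repr ⟨x, hx⟩ i • (b i : Fin n → K) := by
      have := congrArg (T.subtype) hr
      rw [map_sum] at this
      exact this.symm
    rw [hr2, map_sum]
    refine sum_mem fun i _ => ?_
    rw [map_smul, ← algebraMap_smul L]
    exact smul_mem _ _ (subset_span ⟨i, rfl⟩)
  refine (finrank_mono this).trans ((finrank_range_le_card _).trans ?_)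
  simp

theorem auxExt_sup (K L : Type) [Field K] [Field L] [Algebra K L] {n : ℕ}
    (T S : Submodule K (Fin n → K)) (h : T ⊔ S = ⊤) : auxExt K L T ⊔ auxExt K L S = ⊤ := by
  rw [eq_top_iff]
  intro v _
  have hv : v = ∑ i, v i • auxI K L n (Pi.single i 1) := by
    ext j
    simp only [Finset.sum_apply, Pi.smul_apply, auxI_apply, smul_eq_mul]
    rw [Finset.sum_eq_single j]
    · simp
    · intro i _ hij; simp [Pi.single_apply, hij.symm]
    · simp
  rw [hv]
  refine sum_mem fun i _ => smul_mem _ _ ?_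
  have : (Pi.single i 1 : Fin n → K) ∈ T ⊔ S := by rw [h]; trivial
  obtain ⟨a, ha, b, hb, hab⟩ := mem_sup.1 this
  rw [← hab, map_add]
  exact add_mem (mem_sup_left (subset_span ⟨a, ha, rfl⟩))
    (mem_sup_right (subset_span ⟨b, hb, rfl⟩))

theorem auxExt_finrank (K L : Type) [Field K] [Field L] [Algebra K L] {n : ℕ}
    (T : Submodule K (Fin n → K)) : finrank L (auxExt K L T) = finrank K T := by
  obtain ⟨S, hS⟩ := T.exists_isCompl
  have h1 := finrank_add_eq_of_isCompl hS
  have h2 := finrank_add_le_finrank_add_finrank (auxExt K L T) (auxExt K L S)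
  rw [auxExt_sup K L T S hS.sup_eq_top, finrank_top] at h2
  rw [finrank_fin_fun] at h1 h2
  have h3 := auxExt_finrank_le K L T
  have h4 := auxExt_finrank_le K L S
  omega

theorem auxExt_dual (K L : Type) [Field K] [Field L] [Algebra K L] {n : ℕ}
    (T : Submodule K (Fin n → K)) : auxExt K L (dualCode K T) = dualCode L (auxExt K L T) := by
  have h1 := aux_dual_finrank K T
  have h2 := aux_dual_finrank L (auxExt K L T)
  rw [auxExt_finrank] at h2
  apply eq_of_le_of_finrank_eq
  · unfold auxExt
    rw [span_le]
    rintro _ ⟨y, hy, rfl⟩ c hc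
    induction hc using span_induction with
    | mem x hx =>
      obtain ⟨x, hx, rfl⟩ := hx
      simp only [auxI_apply, ← map_mul, ← map_sum]
      rw [hy x hx, map_zero]
    | zero => simp
    | add a b _ _ ha hb =>
      simp only [Pi.add_apply, add_mul, Finset.sum_add_distrib, ha, hb, add_zero]
    | smul t a _ ha =>
      simp only [Pi.smul_apply, smul_eq_mul, mul_assoc, ← Finset.mul_sum, ha, mul_zero]
  · rw [auxExt_finrank]; omega

theorem aux_rn {K V W : Type} [Field K] [AddCommGroup V] [Module K V] [FiniteDimensional K V]
    [AddCommGroup W] [Module K W] (f : V →ₗ[K] W) (A : Submodule K V) :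
    finrank K (A.map f) + finrank K (A ⊓ LinearMap.ker f : Submodule K V) = finrank K A := by
  have h := LinearMap.finrank_range_add_finrank_ker (f.domRestrict A)
  rw [LinearMap.range_domRestrict, LinearMap.ker_domRestrict] at h
  rw [← h, ← map_comap_subtype, finrank_map_subtype_eq]

theorem aux_key (K L : Type) [Field K] [Field L] [Algebra K L] {n k k' : ℕ}
    (C : Submodule L (Fin n → L)) (f : (Fin n → L) →ₗ[L] (Fin k → L))
    (f' : (Fin n → L) →ₗ[L] (Fin k' → L)) (hf : LinearMap.ker f = dualCode L C)
    (hf' : LinearMap.ker f' = C) (T : Submodule K (Fin n → K)) :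
    finrank L ((auxExt K L (dualCode K T)).map f') + finrank K T + finrank L C
      = n + finrank L ((auxExt K L T).map f) := by
  have a1 := aux_rn f (auxExt K L T)
  have a2 := aux_rn f' (auxExt K L (dualCode K T))
  have a3 := aux_dual_finrank K T
  have a4 := aux_dual_finrank L C
  have a5 := aux_dual_finrank L (auxExt K L T ⊔ dualCode L C)
  rw [aux_dual_sup, aux_dual_dual, ← auxExt_dual] at a5
  have a6 := finrank_sup_add_finrank_inf_eq (auxExt K L T) (dualCode L C)
  rw [auxExt_finrank] at a1 a2 a6
  rw [hf] at a1
  rw [hf'] at a2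
  omega

theorem aux_evasive (K L : Type) [Field K] [Field L] [Algebra K L] {n k : ℕ}
    (f : (Fin n → L) →ₗ[L] (Fin k → L)) (U : Submodule K (Fin k → L))
    (hU : U = LinearMap.range (f.restrictScalars K ∘ₗ auxI K L n))
    (hinj : Function.Injective (f.restrictScalars K ∘ₗ auxI K L n)) (h r : ℕ) (hh : h ≤ k) :
    ¬ IsEvasive K L U h r ↔ ∃ T : Submodule K (Fin n → K), finrank K T = r + 1 ∧
      finrank L ((auxExt K L T).map f) ≤ h := by
  set g := f.restrictScalars K ∘ₗ auxI K L n with hg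
  have hfin : FiniteDimensional K U := by rw [hU]; infer_instance
  unfold IsEvasive
  push Not
  constructor
  · rintro ⟨W, hW, hr⟩
    have h0 : finrank K ((W.restrictScalars K).comap g) = finrank K (U ⊓ W.restrictScalars K :
        Submodule K (Fin k → L)) := by
      rw [hU, ← map_comap_eq]
      exact (LinearEquiv.finrank_eq (equivMapOfInjective g hinj _))
    obtain ⟨T, hT, hTr⟩ := aux_shrink ((W.restrictScalars K).comap g) (r + 1) (by omega)
    refine ⟨T, hTr, ?_⟩
    rw [← hW]
    apply finrank_mono
    unfold auxExt
    rw [map_span, span_le]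
    rintro _ ⟨_, ⟨x, hx, rfl⟩, rfl⟩
    exact hT hx
  · rintro ⟨T, hT, hTh⟩
    obtain ⟨W, hW, hWh⟩ := aux_extend _ h hTh (by rw [finrank_fin_fun]; exact hh)
    refine ⟨W, hWh, ?_⟩
    have h1 : T.map g ≤ U ⊓ W.restrictScalars K := by
      rintro _ ⟨x, hx, rfl⟩
      refine ⟨by rw [hU]; exact ⟨x, rfl⟩, ?_⟩
      exact hW ⟨_, subset_span ⟨x, hx, rfl⟩, rfl⟩
    have : FiniteDimensional K (U ⊓ W.restrictScalars K : Submodule K (Fin k → L)) :=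
      finiteDimensional_inf_left _ _
    have h2 := finrank_mono h1
    have h3 := LinearEquiv.finrank_eq (equivMapOfInjective g hinj T)
    omega

def auxF (L : Type) [Field L] {n k : ℕ} (G : Fin k → Fin n → L) :
    (Fin n → L) →ₗ[L] (Fin k → L) := Matrix.mulVecLin (Matrix.of G)

theorem auxF_apply (L : Type) [Field L] {n k : ℕ} (G : Fin k → Fin n → L) (v : Fin n → L)
    (i : Fin k) : auxF L G v i = ∑ j, G i j * v j := rfl

theorem auxF_ker (L : Type) [Field L] {n k : ℕ} (C : Submodule L (Fin n → L))
    (G : Fin k → Fin n → L) (hG : IsGenMatrix L C G) :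
    LinearMap.ker (auxF L G) = dualCode L C := by
  ext v
  rw [LinearMap.mem_ker]
  constructor
  · intro h c hc
    rw [hG] at hc
    induction hc using span_induction with
    | mem x hx =>
      obtain ⟨i, rfl⟩ := hx
      exact congrFun h i
    | zero => simp
    | add a b _ _ ha hb =>
      simp only [Pi.add_apply, add_mul, Finset.sum_add_distrib, ha, hb, add_zero]
    | smul t a _ ha =>
      simp only [Pi.smul_apply, smul_eq_mul, mul_assoc, ← Finset.mul_sum, ha, mul_zero]
  · intro h
    ext i
    exact h (G i) (by rw [hG]; exact subset_span ⟨i, rfl⟩)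

theorem auxF_range (K L : Type) [Field K] [Field L] [Algebra K L] {n k : ℕ}
    (G : Fin k → Fin n → L) :
    span K (Set.range fun j : Fin n => fun i : Fin k => G i j)
      = LinearMap.range ((auxF L G).restrictScalars K ∘ₗ auxI K L n) := by
  have hs : ∀ x : Fin n → K, ((auxF L G).restrictScalars K ∘ₗ auxI K L n) x
      = ∑ j, x j • (fun i : Fin k => G i j) := by
    intro x
    ext i
    change auxF L G (auxI K L n x) i = _
    rw [auxF_apply, Finset.sum_apply]
    refine Finset.sum_congr rfl fun j _ => ?_
    rw [auxI_apply, Pi.smul_apply, Algebra.smul_def, mul_comm]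
  ext v
  rw [mem_span_range_iff_exists_fun, LinearMap.mem_range]
  simp only [hs]

theorem aux_inj (K L : Type) [Field K] [Field L] [Algebra K L] {n k : ℕ}
    (f : (Fin n → L) →ₗ[L] (Fin k → L)) :
    Function.Injective (f.restrictScalars K ∘ₗ auxI K L n) ↔
      ∀ x : Fin n → K, auxI K L n x ∈ LinearMap.ker f → x = 0 := by
  rw [injective_iff_map_eq_zero]
  rfl

/-- `U` is `(h,r)`-evasive iff the rank-metric dual system `U'` is
`(n-k-r+h-1, n-r-2)`-evasive. -/
theorem stmt5 [Fintype Fq] (n k h r : ℕ) (hk1 : 1 ≤ k) (hkn : k < n)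
    (hhk : h < k) (hhr : h ≤ r) (hrub : r + k + 1 ≤ n + h)
    (C : Submodule Fqm (Fin n → Fqm)) (hdim : finrank Fqm ↥C = k)
    (hnd : IsNondegenerate Fq Fqm k C) (hd : 2 ≤ minRankDist Fq Fqm C)
    (U : Submodule Fq (Fin k → Fqm)) (hU : IsAssociatedSystem Fq Fqm C U)
    (U' : Submodule Fq (Fin (n - k) → Fqm))
    (hU' : IsAssociatedSystem Fq Fqm (dualCode Fqm C) U') :
    IsEvasive Fq Fqm U h r ↔ IsEvasive Fq Fqm U' ((n + h) - (k + r + 1)) (n - r - 2) := by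
  obtain ⟨G, hG, rfl⟩ := hU
  obtain ⟨G', hG', rfl⟩ := hU'
  obtain ⟨G0, hG0, hn0⟩ := hnd
  have kf := auxF_ker Fqm C G hG
  have kf0 := auxF_ker Fqm C G0 hG0
  have kf' := auxF_ker Fqm _ G' hG'
  rw [aux_dual_dual] at kf'
  have inj : Function.Injective ((auxF Fqm G).restrictScalars Fq ∘ₗ auxI Fq Fqm n) := by
    rw [aux_inj, kf, ← kf0, ← aux_inj]
    rw [auxF_range] at hn0
    have := LinearMap.finrank_range_add_finrank_ker
      ((auxF Fqm G0).restrictScalars Fq ∘ₗ auxI Fq Fqm n)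
    rw [hn0, finrank_fin_fun] at this
    rw [← LinearMap.ker_eq_bot, ← finrank_eq_zero (R := Fq)]
    omega
  have inj' : Function.Injective ((auxF Fqm G').restrictScalars Fq ∘ₗ auxI Fq Fqm n) := by
    rw [aux_inj, kf']
    intro x hx
    by_contra hx0
    have h1 : minRankDist Fq Fqm C ≤ rankWeight Fq Fqm (auxI Fq Fqm n x) := by
      apply Nat.sInf_le
      refine ⟨_, hx, ?_, rfl⟩
      intro h
      apply hx0
      ext i
      have := congrFun h i
      rw [auxI_apply] at this
      simpa using this
    have h2 : rankWeight Fq Fqm (auxI Fq Fqm n x) ≤ 1 := by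
      unfold rankWeight
      have : span Fq (Set.range (auxI Fq Fqm n x)) ≤ span Fq {(1 : Fqm)} := by
        rw [span_le]
        rintro _ ⟨i, rfl⟩
        rw [auxI_apply, Algebra.algebraMap_eq_smul_one]
        exact smul_mem _ _ (mem_span_singleton_self _)
      exact (finrank_mono this).trans ((finrank_span_le_card _).trans (by simp))
    omega
  rw [← not_iff_not, aux_evasive Fq Fqm (auxF Fqm G) _ (auxF_range Fq Fqm G) inj h r hhk.le,
    aux_evasive Fq Fqm (auxF Fqm G') _ (auxF_range Fq Fqm G') inj' _ _ (by omega)]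
  constructor
  · rintro ⟨T, hT, hTh⟩
    have h1 := aux_key Fq Fqm C _ _ kf kf' T
    have h2 := aux_dual_finrank Fq T
    exact ⟨dualCode Fq T, by omega, by omega⟩
  · rintro ⟨T, hT, hTh⟩
    have h1 := aux_key Fq Fqm C _ _ kf kf' (dualCode Fq T)
    have h2 := aux_dual_finrank Fq T
    rw [aux_dual_dual] at h1
    exact ⟨dualCode Fq T, by omega, by omega⟩
end
end

section
/- Suppose 1 ≤ h < k, h+1 divides km, and n = km/(h+1). Let U be an [n,k]_{q^m/q} system and let C be a nondegenerate [n,k]_{q^m/q} code associated to U (i.e., U is the 𝔽_q-span of the columns of a generator matrix of C). Then U is h-scattered (hence maximum h-scattered) if and only if C is an MRD code. -/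
open Module Submodule

noncomputable section

variable (Fq Fqm : Type) [Field Fq] [Field Fqm] [Algebra Fq Fqm]

theorem aux_interval {K V : Type} [Field K] [AddCommGroup V] [Module K V] [FiniteDimensional K V]
    (A B : Submodule K V) (hAB : A ≤ B) (r : ℕ) (h1 : finrank K A ≤ r) (h2 : r ≤ finrank K B) :
    ∃ X : Submodule K V, A ≤ X ∧ X ≤ B ∧ finrank K X = r := by
  induction r, h1 using Nat.le_induction with
  | base => exact ⟨A, le_rfl, hAB, rfl⟩
  | succ r hr ih =>
    obtain ⟨X, hX1, hX2, hX3⟩ := ih (by omega)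
    have hlt : X < B := by
      refine lt_of_le_of_ne hX2 ?_
      rintro rfl
      omega
    obtain ⟨v, hvB, hvX⟩ := SetLike.exists_of_lt hlt
    refine ⟨X ⊔ span K {v}, hX1.trans le_sup_left, sup_le hX2 ?_, ?_⟩
    · rw [span_le]; simpa using hvB
    · have h3 : X < X ⊔ span K {v} := by
        refine lt_of_le_of_ne le_sup_left ?_
        intro h
        apply hvX
        rw [h]
        exact mem_sup_right (mem_span_singleton_self v)
      have h4 := Submodule.finrank_lt_finrank_of_lt h3
      have h5 := Submodule.finrank_add_le_finrank_add_finrank X (span K {v})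
      have h6 : finrank K (span K {v}) ≤ 1 := by
        simpa using finrank_span_le_card (R := K) ({v} : Set V)
      omega

/-- vectors all of whose entries lie in `W` -/
def powSub {n : ℕ} (W : Submodule Fq Fqm) : Submodule Fq (Fin n → Fqm) :=
  LinearMap.range (W.subtype.compLeft (Fin n))

theorem mem_powSub {n : ℕ} (W : Submodule Fq Fqm) (x : Fin n → Fqm) :
    x ∈ powSub Fq Fqm W ↔ ∀ i, x i ∈ W := by
  constructor
  · rintro ⟨y, rfl⟩ i
    exact (y i).2
  · intro h
    exact ⟨fun i => ⟨x i, h i⟩, rfl⟩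

theorem finrank_powSub {n : ℕ} [FiniteDimensional Fq Fqm] (W : Submodule Fq Fqm) :
    finrank Fq (powSub Fq Fqm (n := n) W) = n * finrank Fq W := by
  unfold powSub
  rw [LinearMap.finrank_range_of_inj]
  · simp [Module.finrank_pi_fintype]
  · intro a b hab
    funext i
    exact Subtype.ext (congrFun hab i)

/-- trace form on vectors -/
def trForm (n : ℕ) : LinearMap.BilinForm Fq (Fin n → Fqm) :=
  LinearMap.mk₂ Fq (fun x y => Algebra.trace Fq Fqm (∑ i, x i * y i))
    (by intro a b c; simp [add_mul, Finset.sum_add_distrib])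
    (by intro a b c; simp [← Finset.smul_sum])
    (by intro a b c; simp [mul_add, Finset.sum_add_distrib])
    (by intro a b c; simp [← Finset.smul_sum])

theorem trForm_apply (n : ℕ) (x y : Fin n → Fqm) :
    trForm Fq Fqm n x y = Algebra.trace Fq Fqm (∑ i, x i * y i) := rfl

theorem trForm_refl (n : ℕ) : (trForm Fq Fqm n).IsRefl := by
  intro x y h
  rw [trForm_apply] at *
  rw [← h]
  congr 1
  exact Finset.sum_congr rfl fun i _ => mul_comm _ _

theorem aux_tr [FiniteDimensional Fq Fqm] [Algebra.IsSeparable Fq Fqm] (z : Fqm)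
    (hz : ∀ t : Fqm, Algebra.trace Fq Fqm (t * z) = 0) : z = 0 :=
  (traceForm_nondegenerate Fq Fqm).2 z fun t => hz t

theorem trForm_nondeg (n : ℕ) [FiniteDimensional Fq Fqm] [Algebra.IsSeparable Fq Fqm] :
    (trForm Fq Fqm n).Nondegenerate := by
  have hr : ∀ y, (∀ x, trForm Fq Fqm n x y = 0) → y = 0 := by
    intro y hy
    funext i
    apply aux_tr Fq Fqm
    intro t
    have := hy (Pi.single i t)
    rw [trForm_apply] at this
    simpa [Pi.single_apply, ite_mul] using this
  exact ⟨fun y hy => hr y fun x => trForm_refl Fq Fqm n _ _ (hy x), hr⟩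

theorem mem_orth_pow {n : ℕ} (W : Submodule Fq Fqm) (y : Fin n → Fqm) :
    y ∈ (trForm Fq Fqm n).orthogonal (powSub Fq Fqm W) ↔
      ∀ i, y i ∈ (Algebra.traceForm Fq Fqm).orthogonal W := by
  constructor
  · intro h i w hw
    have := h (Pi.single i w) (by
      rw [mem_powSub]
      intro j
      by_cases hj : j = i
      · subst hj; simpa using hw
      · simp [Pi.single_apply, hj])
    rw [trForm_apply] at this
    rw [Algebra.traceForm_apply]
    simpa [Pi.single_apply, ite_mul] using this
  · intro h x hx
    rw [mem_powSub] at hx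
    rw [trForm_apply, map_sum]
    exact Finset.sum_eq_zero fun i _ => h i _ (hx i)

theorem mem_orth_code {n : ℕ} [FiniteDimensional Fq Fqm] [Algebra.IsSeparable Fq Fqm]
    (C : Submodule Fqm (Fin n → Fqm)) (y : Fin n → Fqm) :
    y ∈ (trForm Fq Fqm n).orthogonal (C.restrictScalars Fq) ↔ ∀ c ∈ C, ∑ i, c i * y i = 0 := by
  constructor
  · intro h c hc
    apply aux_tr Fq Fqm
    intro t
    have := h (t • c) (C.smul_mem t hc)
    rw [trForm_apply] at this
    rw [← this, Finset.mul_sum]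
    simp [mul_assoc]
  · intro h c hc
    rw [trForm_apply, h c hc, map_zero]

theorem aux_duality {n k m h : ℕ} [FiniteDimensional Fq Fqm] [Algebra.IsSeparable Fq Fqm]
    (hm : finrank Fq Fqm = m) (hhm : h + 1 ≤ m) (hn : n * (h + 1) = k * m)
    (C : Submodule Fqm (Fin n → Fqm)) (hdim : finrank Fqm ↥C = k)
    (W : Submodule Fq Fqm) (hW : finrank Fq W = m - h - 1) :
    (∀ v ∈ C, (∀ i, v i ∈ W) → v = 0) ↔
    (∀ y : Fin n → Fqm, (∀ i, y i ∈ (Algebra.traceForm Fq Fqm).orthogonal W) →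
      (∀ c ∈ C, ∑ i, c i * y i = 0) → y = 0) := by
  set B := trForm Fq Fqm n
  set P := powSub Fq Fqm (n := n) W
  set D := C.restrictScalars Fq
  have hD : finrank Fq D = k * m := by
    have h1 : finrank Fq Fqm * finrank Fqm C = finrank Fq C := finrank_mul_finrank Fq Fqm C
    have h2 : finrank Fq D = finrank Fq C := rfl
    rw [h2, ← h1, hm, hdim, mul_comm]
  have hP : finrank Fq P = n * (m - h - 1) := by rw [finrank_powSub, hW]
  have hV : finrank Fq (Fin n → Fqm) = n * m := by simp [Module.finrank_pi_fintype, hm]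
  have hsum : finrank Fq D + finrank Fq P = n * m := by
    rw [hD, hP, ← hn, ← mul_add]; congr 1; omega
  have h1 := Submodule.finrank_sup_add_finrank_inf_eq D P
  have h2 := LinearMap.BilinForm.finrank_orthogonal (trForm_nondeg Fq Fqm n) (D ⊔ P)
  have h3 : finrank Fq ↥(D ⊔ P) ≤ n * m := hV ▸ Submodule.finrank_le _
  have h4 : finrank Fq ↥(D ⊓ P) = finrank Fq (B.orthogonal (D ⊔ P)) := by
    rw [h2]; omega
  have e1 : (∀ v ∈ C, (∀ i, v i ∈ W) → v = 0) ↔ finrank Fq ↥(D ⊓ P) = 0 := by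
    rw [Submodule.finrank_eq_zero, Submodule.eq_bot_iff]
    constructor
    · intro H v hv
      exact H v hv.1 ((mem_powSub Fq Fqm W v).1 hv.2)
    · intro H v hv hw
      exact H v ⟨hv, (mem_powSub Fq Fqm W v).2 hw⟩
  have e2 : ∀ y, y ∈ B.orthogonal (D ⊔ P) ↔ y ∈ B.orthogonal D ∧ y ∈ B.orthogonal P := by
    intro y
    constructor
    · intro hy
      exact ⟨LinearMap.BilinForm.orthogonal_le le_sup_left hy,
        LinearMap.BilinForm.orthogonal_le le_sup_right hy⟩
    · rintro ⟨ha, hb⟩ x hx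
      obtain ⟨a, ha', b, hb', rfl⟩ := mem_sup.1 hx
      have q1 := ha a ha'
      have q2 := hb b hb'
      change B (a + b) y = 0
      rw [map_add, LinearMap.add_apply]
      change B a y = 0 at q1
      change B b y = 0 at q2
      rw [q1, q2, add_zero]
  rw [e1, h4, Submodule.finrank_eq_zero, Submodule.eq_bot_iff]
  constructor
  · intro H y hy hc
    exact H y ((e2 y).2 ⟨(mem_orth_code Fq Fqm C y).2 hc, (mem_orth_pow Fq Fqm W y).2 hy⟩)
  · intro H y hy
    obtain ⟨ha, hb⟩ := (e2 y).1 hy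
    exact H y ((mem_orth_pow Fq Fqm W y).1 hb) ((mem_orth_code Fq Fqm C y).1 ha)

theorem aux_dist {n k m h : ℕ} [FiniteDimensional Fq Fqm]
    (hm : finrank Fq Fqm = m) (hhm : h + 1 ≤ m)
    (C : Submodule Fqm (Fin n → Fqm)) (hdim : finrank Fqm ↥C = k) (hk : 1 ≤ k) :
    m - h ≤ minRankDist Fq Fqm C ↔
      ∀ W : Submodule Fq Fqm, finrank Fq W = m - h - 1 →
        ∀ v ∈ C, (∀ i, v i ∈ W) → v = 0 := by
  constructor
  · intro H W hW v hv hw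
    by_contra hne
    have h1 : minRankDist Fq Fqm C ≤ rankWeight Fq Fqm v := Nat.sInf_le ⟨v, hv, hne, rfl⟩
    have h2 : rankWeight Fq Fqm v ≤ finrank Fq W := by
      apply Submodule.finrank_mono
      rw [span_le]
      rintro _ ⟨i, rfl⟩
      exact hw i
    omega
  · intro H
    by_contra hlt
    have hne : {w : ℕ | ∃ v ∈ C, v ≠ 0 ∧ rankWeight Fq Fqm v = w}.Nonempty := by
      have : C ≠ ⊥ := by
        rintro rfl
        simp at hdim
        omega
      obtain ⟨v, hv, hv0⟩ := Submodule.exists_mem_ne_zero_of_ne_bot this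
      exact ⟨_, v, hv, hv0, rfl⟩
    obtain ⟨v, hv, hv0, hvw⟩ := Nat.sInf_mem hne
    change rankWeight Fq Fqm v = minRankDist Fq Fqm C at hvw
    unfold rankWeight at hvw
    obtain ⟨W, hW1, -, hW⟩ := aux_interval (span Fq (Set.range v)) ⊤ le_top (m - h - 1)
      (by omega) (by rw [finrank_top]; omega)
    exact hv0 (H W hW v hv fun i => hW1 (subset_span ⟨i, rfl⟩))

theorem aux_singleton {n k m h : ℕ} [FiniteDimensional Fq Fqm]
    (hm : finrank Fq Fqm = m) (hhm : h + 1 ≤ m) (hn : n * (h + 1) = k * m) (hn0 : 0 < n)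
    (C : Submodule Fqm (Fin n → Fqm)) (hdim : finrank Fqm ↥C = k) :
    minRankDist Fq Fqm C ≤ m - h := by
  obtain ⟨W, -, -, hW⟩ := aux_interval (⊥ : Submodule Fq Fqm) ⊤ le_top (m - h)
      (by simp) (by rw [finrank_top]; omega)
  set P := powSub Fq Fqm (n := n) W
  set D := C.restrictScalars Fq
  have hD : finrank Fq D = k * m := by
    have h1 : finrank Fq Fqm * finrank Fqm C = finrank Fq C := finrank_mul_finrank Fq Fqm C
    have h2 : finrank Fq D = finrank Fq C := rfl
    rw [h2, ← h1, hm, hdim, mul_comm]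
  have hP : finrank Fq P = n * (m - h) := by rw [finrank_powSub, hW]
  have hV : finrank Fq (Fin n → Fqm) = n * m := by simp [Module.finrank_pi_fintype, hm]
  have hsum : finrank Fq D + finrank Fq P = n * m + n := by
    rw [hD, hP, ← hn, ← mul_add, ← mul_add_one]; congr 1; omega
  have h1 := Submodule.finrank_sup_add_finrank_inf_eq D P
  have h3 : finrank Fq ↥(D ⊔ P) ≤ n * m := hV ▸ Submodule.finrank_le _
  have hne : D ⊓ P ≠ ⊥ := by
    intro hb
    rw [hb, finrank_bot] at h1
    omega
  obtain ⟨v, hv, hv0⟩ := Submodule.exists_mem_ne_zero_of_ne_bot hne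
  have h4 : minRankDist Fq Fqm C ≤ rankWeight Fq Fqm v := Nat.sInf_le ⟨v, hv.1, hv0, rfl⟩
  have h2 : rankWeight Fq Fqm v ≤ finrank Fq W := by
    apply Submodule.finrank_mono
    rw [span_le]
    rintro _ ⟨i, rfl⟩
    exact (mem_powSub Fq Fqm W v).1 hv.2 i
  omega

theorem aux_evasive_s11 {n k m h : ℕ} [FiniteDimensional Fq Fqm]
    (hm : finrank Fq Fqm = m) (hhm : h + 1 ≤ m) (hhk : h < k) (hkn : k ≤ n)
    (C : Submodule Fqm (Fin n → Fqm)) (U : Submodule Fq (Fin k → Fqm))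
    (hUn : finrank Fq U = n) (G : Fin k → Fin n → Fqm) (hG : C = span Fqm (Set.range G))
    (hU : U = span Fq (Set.range fun j : Fin n => fun i : Fin k => G i j)) :
    IsEvasive Fq Fqm U h h ↔
      ∀ T : Submodule Fq Fqm, finrank Fq T = h + 1 → ∀ y : Fin n → Fqm, (∀ i, y i ∈ T) →
      (∀ c ∈ C, ∑ i, c i * y i = 0) → y = 0 := by
  set g : Fin n → Fin k → Fqm := fun j i => G i j with hg
  have hgi : LinearIndependent Fq g := by
    rw [linearIndependent_iff_card_eq_finrank_span, Set.finrank, ← hU, hUn, Fintype.card_fin]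
  have hort : ∀ y : Fin n → Fqm, (∀ c ∈ C, ∑ i, c i * y i = 0) ↔ ∑ j, y j • g j = 0 := by
    intro y
    constructor
    · intro H
      funext i
      have := H (G i) (hG ▸ subset_span ⟨i, rfl⟩)
      simpa [Finset.sum_apply, hg, mul_comm] using this
    · intro H c hc
      rw [hG] at hc
      induction hc using span_induction with
      | mem x hx =>
        obtain ⟨i, rfl⟩ := hx
        have := congrFun H i
        simpa [Finset.sum_apply, hg, mul_comm] using this
      | zero => simp
      | add a b _ _ ha hb => simp [add_mul, Finset.sum_add_distrib, ha, hb]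
      | smul t a _ ha => simp [mul_assoc, ← Finset.mul_sum, ha]
  constructor
  · intro H T hT y hyT hy
    rw [hort] at hy
    by_contra hy0
    let b : Basis (Fin (h+1)) Fq T := finBasisOfFinrankEq Fq T hT
    let a : Fin n → Fin (h+1) → Fq := fun j t => b.repr ⟨y j, hyT j⟩ t
    have hya : ∀ j, y j = ∑ t, a j t • (b t : Fqm) := by
      intro j
      have := congrArg (Subtype.val) (b.sum_repr ⟨y j, hyT j⟩)
      rw [AddSubmonoidClass.coe_finsetSum] at this
      exact this.symm
    let u : Fin (h+1) → Fin k → Fqm := fun t => ∑ j, a j t • g j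
    have huU : ∀ t, u t ∈ U := fun t => Submodule.sum_mem _ fun j _ =>
      Submodule.smul_mem _ _ (hU ▸ subset_span ⟨j, rfl⟩)
    have hub : ∑ t, (b t : Fqm) • u t = 0 := by
      rw [← hy]
      simp only [u, Finset.smul_sum, hya, Finset.sum_smul]
      rw [Finset.sum_comm]
      refine Finset.sum_congr rfl fun j _ => Finset.sum_congr rfl fun t _ => ?_
      rw [smul_assoc, smul_comm]
    obtain ⟨X, hX1, hX2, hX3⟩ := aux_interval (span Fq (Set.range u)) U
      (by rw [span_le]; rintro _ ⟨t, rfl⟩; exact huU t) (h+1)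
      ((finrank_range_le_card (R := Fq) u).trans (by simp)) (by omega)
    let x : Basis (Fin (h+1)) Fq X := finBasisOfFinrankEq Fq X hX3
    have huX : ∀ t, u t ∈ X := fun t => hX1 (subset_span ⟨t, rfl⟩)
    let c : Fin (h+1) → Fin (h+1) → Fq := fun t s => x.repr ⟨u t, huX t⟩ s
    have huc : ∀ t, u t = ∑ s, c t s • (x s : Fin k → Fqm) := by
      intro t
      have := congrArg (Subtype.val) (x.sum_repr ⟨u t, huX t⟩)
      rw [AddSubmonoidClass.coe_finsetSum] at this
      exact this.symm
    have hbi : LinearIndependent Fq (fun t => (b t : Fqm)) :=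
      b.linearIndependent.map' T.subtype (ker_subtype T)
    have hdep : ¬ LinearIndependent Fqm (fun s => (x s : Fin k → Fqm)) := by
      intro hli
      rw [Fintype.linearIndependent_iff] at hli hgi hbi
      have h0 : ∑ s, (∑ t, c t s • (b t : Fqm)) • (x s : Fin k → Fqm) = 0 := by
        rw [← hub]
        simp only [huc, Finset.smul_sum, Finset.sum_smul]
        rw [Finset.sum_comm]
        refine Finset.sum_congr rfl fun j _ => Finset.sum_congr rfl fun t _ => ?_
        rw [smul_assoc, smul_comm]
      have hc : ∀ t s, c t s = 0 := fun t s => hbi (fun t => c t s) (hli _ h0 s) t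
      have hu0 : ∀ t, u t = 0 := fun t => by rw [huc]; simp [hc]
      have ha : ∀ j t, a j t = 0 := fun j t => hgi (fun j => a j t) (hu0 t) j
      apply hy0
      funext j
      rw [hya]; simp [ha]
    have hfr : finrank Fqm (span Fqm (Set.range fun s => (x s : Fin k → Fqm))) ≤ h := by
      rw [linearIndependent_iff_card_le_finrank_span, Set.finrank, Fintype.card_fin] at hdep
      omega
    obtain ⟨W, hW1, -, hW3⟩ := aux_interval _ ⊤ le_top h hfr (by simp; omega)
    have hXW : X ≤ U ⊓ W.restrictScalars Fq := by
      refine le_inf hX2 ?_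
      intro z hz
      have := congrArg (Subtype.val) (x.sum_repr ⟨z, hz⟩)
      rw [← show _ = z from this]
      rw [AddSubmonoidClass.coe_finsetSum]
      exact Submodule.sum_mem _ fun s _ => Submodule.smul_mem _ _ (hW1 (subset_span ⟨s, rfl⟩))
    have := Submodule.finrank_mono hXW
    have := H W hW3
    omega
  · intro H W hW
    by_contra hlt
    obtain ⟨x, hx⟩ := exists_linearIndependent_of_le_finrank (R := Fq)
      (M := ↥(U ⊓ W.restrictScalars Fq)) (n := h + 1) (by omega)
    have hx' : LinearIndependent Fq (fun t => (x t : Fin k → Fqm)) :=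
      hx.map' (Submodule.subtype _) (ker_subtype _)
    have hdep : ¬ LinearIndependent Fqm (fun t => (⟨x t, (x t).2.2⟩ : W)) := by
      intro hli
      have := hli.fintype_card_le_finrank
      rw [hW, Fintype.card_fin] at this
      omega
    rw [Fintype.not_linearIndependent_iff] at hdep
    obtain ⟨b, hb, t0, ht0⟩ := hdep
    have hb' : ∑ t, b t • (x t : Fin k → Fqm) = 0 := by
      have := congrArg Subtype.val hb
      simpa using this
    have hxg : ∀ t, ∃ a : Fin n → Fq, ∑ j, a j • g j = (x t : Fin k → Fqm) := by
      intro t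
      rw [← Submodule.mem_span_range_iff_exists_fun, ← hU]
      exact (x t).2.1
    choose a ha using hxg
    obtain ⟨T, hT1, -, hT3⟩ := aux_interval (span Fq (Set.range b)) ⊤ le_top (h+1)
      ((finrank_range_le_card (R := Fq) b).trans (by simp)) (by rw [finrank_top]; omega)
    have hbT : ∀ t, b t ∈ T := fun t => hT1 (subset_span ⟨t, rfl⟩)
    have hy := H T hT3 (fun j => ∑ t, a t j • b t)
      (fun j => Submodule.sum_mem _ fun t _ => Submodule.smul_mem _ _ (hbT t)) (by
        rw [hort, ← hb']
        simp only [← ha, Finset.smul_sum, Finset.sum_smul]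
        rw [Finset.sum_comm]
        refine Finset.sum_congr rfl fun j _ => Finset.sum_congr rfl fun t _ => ?_
        rw [smul_assoc, smul_comm])
    let β : Basis (Fin (h+1)) Fq T := finBasisOfFinrankEq Fq T hT3
    have hz : ∀ t s, β.repr ⟨b t, hbT t⟩ s = 0 := by
      intro t s
      refine Fintype.linearIndependent_iff.1 hx' (fun t => β.repr ⟨b t, hbT t⟩ s) ?_ t
      simp only [← ha, Finset.smul_sum]
      rw [Finset.sum_comm]
      refine Finset.sum_eq_zero fun j _ => ?_
      have h1 : ∑ t, a t j • (⟨b t, hbT t⟩ : T) = 0 := by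
        apply Subtype.ext
        have := congrFun hy j
        simpa using this
      have h2 := congrArg (fun z => β.repr z s) h1
      simp only [map_sum, map_smul, Finsupp.finset_sum_apply, Finsupp.smul_apply, map_zero,
        Finsupp.zero_apply, smul_eq_mul] at h2
      simp only [smul_smul]
      rw [← Finset.sum_smul]
      have h3 : ∑ t, β.repr ⟨b t, hbT t⟩ s * a t j = 0 := by
        rw [← h2]; exact Finset.sum_congr rfl fun _ _ => mul_comm _ _
      rw [h3, zero_smul]
    apply ht0
    have : (⟨b t0, hbT t0⟩ : T) = 0 := by
      apply β.repr.injective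
      ext s
      simp [hz]
    exact congrArg Subtype.val this

/-- with `h+1 ∣ km` and `n = km/(h+1)`, `U` is (maximum) `h`-scattered iff
`C` is MRD, i.e. `km = min{m(n-d+1), n(m-d+1)}` where `d` is the minimum rank distance. -/
theorem stmt11 [Fintype Fq] (n k m h : ℕ) (hm : finrank Fq Fqm = m)
    (hh1 : 1 ≤ h) (hhk : h < k) (hdvd : (h + 1) ∣ k * m) (hn : n * (h + 1) = k * m)
    (C : Submodule Fqm (Fin n → Fqm)) (hdim : finrank Fqm ↥C = k)
    (hnd : IsNondegenerate Fq Fqm k C)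
    (U : Submodule Fq (Fin k → Fqm)) (hsys : IsSystem Fq Fqm n U)
    (hU : IsAssociatedSystem Fq Fqm C U) :
    IsEvasive Fq Fqm U h h ↔
      (k : ℤ) * m = min ((m : ℤ) * ((n : ℤ) - (minRankDist Fq Fqm C : ℤ) + 1))
        ((n : ℤ) * ((m : ℤ) - (minRankDist Fq Fqm C : ℤ) + 1)) := by
  have hkn : k ≤ n := by
    have := Submodule.finrank_le C
    simpa [hdim] using this
  have hn0 : 0 < n := by omega
  have hhm : h + 1 ≤ m := by
    have h1 : n * (h + 1) ≤ n * m := by rw [hn]; exact Nat.mul_le_mul_right m hkn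
    exact Nat.le_of_mul_le_mul_left h1 hn0
  have hmn : m ≤ n := by
    have h1 : m * (h + 1) ≤ n * (h + 1) := by
      rw [hn, mul_comm]; exact Nat.mul_le_mul_right m hhk
    exact Nat.le_of_mul_le_mul_right h1 (by omega)
  haveI : FiniteDimensional Fq Fqm := FiniteDimensional.of_finrank_pos (by omega)
  haveI : Algebra.IsSeparable Fq Fqm := inferInstance
  obtain ⟨G, hG, hUG⟩ := hU
  have hEv := aux_evasive_s11 Fq Fqm hm hhm hhk hkn C U hsys.1 G hG hUG
  have hD := aux_dist Fq Fqm hm hhm C hdim (by omega)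
  have hS := aux_singleton Fq Fqm hm hhm hn hn0 C hdim
  have hnd' := traceForm_nondegenerate Fq Fqm
  have hrefl : (Algebra.traceForm Fq Fqm).IsRefl := (Algebra.traceForm_isSymm Fq).isRefl
  have hmain : IsEvasive Fq Fqm U h h ↔ m - h ≤ minRankDist Fq Fqm C := by
    rw [hEv, hD]
    constructor
    · intro H W hW
      rw [aux_duality Fq Fqm hm hhm hn C hdim W hW]
      apply H
      rw [LinearMap.BilinForm.finrank_orthogonal hnd', hm, hW]
      omega
    · intro H T hT
      have hW : finrank Fq ((Algebra.traceForm Fq Fqm).orthogonal T) = m - h - 1 := by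
        rw [LinearMap.BilinForm.finrank_orthogonal hnd', hm, hT]
        omega
      have := (aux_duality Fq Fqm hm hhm hn C hdim _ hW).1 (H _ hW)
      rwa [LinearMap.BilinForm.orthogonal_orthogonal hnd' hrefl] at this
  rw [hmain]
  set d := minRankDist Fq Fqm C
  have hn' : (n : ℤ) * (h + 1) = k * m := by exact_mod_cast hn
  have hn0' : (0 : ℤ) < n := by exact_mod_cast hn0
  have hmn' : (m : ℤ) ≤ n := by exact_mod_cast hmn
  have hS' : (d : ℤ) ≤ m - h := by omega
  constructor
  · intro hd
    have hde : (d : ℤ) = m - h := by omega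
    have hmh : (0 : ℤ) ≤ m - h - 1 := by omega
    rw [hde, min_eq_right (by nlinarith), ← hn']
    ring
  · intro H
    have h0 : (h : ℤ) + 1 ≤ m := by exact_mod_cast hhm
    by_contra hlt
    have hlt' : (d : ℤ) + 1 ≤ m - h := by omega
    rcases Nat.eq_zero_or_pos d with hd0 | hd0
    · -- d = 0: both terms exceed k m
      rw [hd0] at H
      rcases min_choice ((m : ℤ) * ((n : ℤ) - ((0 : ℕ) : ℤ) + 1))
        ((n : ℤ) * ((m : ℤ) - ((0 : ℕ) : ℤ) + 1)) with h1 | h1 <;> rw [h1, ← hn'] at H <;>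
        push_cast at H <;> nlinarith
    · have hd1 : (1 : ℤ) ≤ d := by exact_mod_cast hd0
      rw [min_eq_right (by nlinarith), ← hn'] at H
      have := mul_left_cancel₀ hn0'.ne' H
      omega
end
end

section
/- Let k ≥ 2, m = 2k−2, n = 2k, let C be a nondegenerate [2k,k]_{q^{2k−2}/q} code and let U be a system associated to C. Then C is a near MRD code (with minimum rank distance k) if and only if U is a (k−2)-scattered [2k,k]_{q^{2k−2}/q} system (which is then maximum (k−2)-scattered, since 2k = km/(k−1)). -/
open Module Submodule

noncomputable section

variable (Fq Fqm : Type) [Field Fq] [Field Fqm] [Algebra Fq Fqm]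

theorem aux_finrank_dual {L : Type} [Field L] {n : ℕ} (W : Submodule L (Fin n → L)) :
    finrank L ↥(dualCode L W) + finrank L ↥W = n := by
  classical
  set b := finBasis L W with hb
  let M : Matrix (Fin (finrank L W)) (Fin n) L := fun i => (b i : Fin n → L)
  have hli : LinearIndependent L M.row := by
    have := b.linearIndependent.map' W.subtype (ker_subtype W)
    exact this
  have hr : M.rank = finrank L W := by
    have := hli.rank_matrix
    simpa using this
  have hk : dualCode L W = LinearMap.ker M.mulVecLin := by
    ext v
    constructor
    · intro hv
      rw [LinearMap.mem_ker]
      ext i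
      exact hv _ (b i).2
    · intro hv c hc
      rw [LinearMap.mem_ker] at hv
      have h1 : ∀ i, ∑ j, (b i : Fin n → L) j * v j = 0 := fun i => congrFun hv i
      let φ : (Fin n → L) →ₗ[L] L :=
        { toFun := fun c => ∑ i, c i * v i
          map_add' := by intro x y; simp [add_mul, Finset.sum_add_distrib]
          map_smul' := by intro x y; simp [mul_assoc, Finset.mul_sum] }
      have h2 : φ ∘ₗ W.subtype = 0 := by
        apply b.ext
        intro i
        exact h1 i
      exact LinearMap.congr_fun h2 ⟨c, hc⟩
  have h3 := LinearMap.finrank_range_add_finrank_ker M.mulVecLin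
  rw [← hk] at h3
  have h4 : finrank L (LinearMap.range M.mulVecLin) = M.rank := rfl
  rw [h4, hr] at h3
  simp at h3
  omega

theorem aux_liftLI {K L : Type} [Field K] [Field L] [Algebra K L] {n r : ℕ}
    (b : Fin r → Fin n → K) (hb : LinearIndependent K b) :
    LinearIndependent L (fun i => fun j => algebraMap K L (b i j)) := by
  rw [Fintype.linearIndependent_iff] at hb ⊢
  intro g hg
  have key : ∀ φ : L →ₗ[K] K, ∀ i, φ (g i) = 0 := by
    intro φ
    apply hb
    ext j
    have h := congrArg φ (congrFun hg j)
    simp only [Finset.sum_apply, Pi.smul_apply, smul_eq_mul, Pi.zero_apply, map_zero, map_sum] at h ⊢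
    rw [← h]
    refine Finset.sum_congr rfl fun i _ => ?_
    rw [mul_comm (g i), ← Algebra.smul_def, map_smul, smul_eq_mul, mul_comm]
  intro i
  exact (Module.forall_dual_apply_eq_zero_iff K (g i)).1 (fun φ => key φ i)

theorem aux_gc_span {K L : Type} [Field K] [Field L] [Algebra K L] {n r : ℕ}
    (b : Fin r → Fin n → K) :
    GaloisClosed K L (span L (Set.range (fun i => fun j => algebraMap K L (b i j)))) := by
  intro θ v hv
  induction hv using Submodule.span_induction with
  | mem x hx =>
    obtain ⟨i, rfl⟩ := hx
    simp only [AlgEquiv.commutes]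
    exact subset_span ⟨i, rfl⟩
  | zero => simp only [Pi.zero_apply, map_zero]; exact zero_mem _
  | add x y _ _ hx hy =>
    simp only [Pi.add_apply, map_add]
    exact add_mem hx hy
  | smul a x _ hx =>
    simp only [Pi.smul_apply, smul_eq_mul, map_mul]
    exact smul_mem _ (θ a) hx

/-- Galois descent. -/
theorem aux_descent {K L : Type} [Field K] [Field L] [Algebra K L] [FiniteDimensional K L]
    [IsGalois K L] {n : ℕ} (A : Submodule L (Fin n → L)) (hA : GaloisClosed K L A) :
    ∃ a : Fin (finrank L A) → Fin n → K,
      A = span L (Set.range (fun i => fun j => algebraMap K L (a i j))) := by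
  classical
  let S : Set (Fin n → L) := {v | v ∈ A ∧ ∃ p : Fin n → K, v = fun j => algebraMap K L (p j)}
  have hS : span L S = A := by
    apply le_antisymm
    · rw [span_le]; exact fun v hv => hv.1
    · intro v hv
      let b := finBasis K L
      let d := b.traceDual
      have hv2 : v = ∑ i, d i • (fun j => algebraMap K L (Algebra.trace K L (b i * v j))) := by
        ext j
        have h := d.sum_repr (v j)
        conv_lhs => rw [← h]
        simp only [Finset.sum_apply, Pi.smul_apply, smul_eq_mul]
        refine Finset.sum_congr rfl fun i _ => ?_
        rw [Basis.traceDual_repr_apply, Algebra.smul_def, mul_comm, Algebra.traceForm_apply,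
          mul_comm (v j)]
      rw [hv2]
      refine sum_mem fun i _ => smul_mem _ _ (subset_span ⟨?_, _, rfl⟩)
      have : (fun j => algebraMap K L (Algebra.trace K L (b i * v j))) =
          ∑ θ : L ≃ₐ[K] L, (fun j => θ ((b i • v) j)) := by
        ext j
        rw [trace_eq_sum_automorphisms]
        simp
      rw [this]
      exact sum_mem fun θ _ => hA θ _ (smul_mem _ _ hv)
  have hex := Submodule.exists_fun_fin_finrank_span_eq L S
  rw [hS] at hex
  obtain ⟨f, hf, hf2, -⟩ := hex
  choose a ha using fun i => (hf i).2
  refine ⟨a, hf2.symm.trans ?_⟩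
  congr 2
  funext i
  exact ha i

theorem aux_pair {K L : Type} [Field K] [Field L] [Algebra K L] {n k : ℕ}
    (G : Fin k → Fin n → L) (lam : Fin k → L) (p : Fin n → K) :
    ∑ i, lam i * (Fintype.linearCombination K (fun j : Fin n => fun i : Fin k => G i j) p) i
      = ∑ j, algebraMap K L (p j) * (Fintype.linearCombination L G lam) j := by
  simp only [Fintype.linearCombination_apply, Finset.sum_apply, Pi.smul_apply, smul_eq_mul,
    Finset.mul_sum]
  rw [Finset.sum_comm]
  refine Finset.sum_congr rfl fun j _ => Finset.sum_congr rfl fun i _ => ?_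
  rw [Algebra.smul_def]
  ring

/-- Smaller subspaces. -/
theorem aux_evasive_s16 {K L : Type} [Field K] [Field L] [Algebra K L] [FiniteDimensional K L]
    {k h : ℕ} (hk : h < k) (U : Submodule K (Fin k → L))
    (hsp : ∀ lam : Fin k → L, (∀ u ∈ U, ∑ i, lam i * u i = 0) → lam = 0)
    (hU : IsEvasive K L U h h) :
    ∀ t w, w + t = h → IsEvasive K L U w w := by
  intro t
  induction t with
  | zero => intro w hw; have : w = h := by omega
            subst this; exact hU
  | succ t ih =>
    intro w hw W hW
    have h1 := ih (w + 1) (by omega)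
    have hex : ∃ u ∈ U, u ∉ W := by
      by_contra hcon
      push Not at hcon
      have hd := aux_finrank_dual W
      have hne : dualCode L W ≠ ⊥ := by
        intro h0
        rw [h0, finrank_bot] at hd
        omega
      obtain ⟨lam, hl, hl0⟩ := Submodule.exists_mem_ne_zero_of_ne_bot hne
      apply hl0
      apply hsp
      intro u hu
      rw [← hl u (hcon u hu)]
      exact Finset.sum_congr rfl fun i _ => mul_comm _ _
    obtain ⟨u, huU, huW⟩ := hex
    have hu0 : u ≠ 0 := fun h => huW (h ▸ zero_mem _)
    have hdim : finrank L ↥(W ⊔ span L {u}) = w + 1 := by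
      have h2 := Submodule.finrank_sup_add_finrank_inf_eq W (span L {u})
      have h3 : W ⊓ span L {u} = ⊥ := by
        rw [eq_bot_iff]
        rintro x ⟨hx, hx2⟩
        obtain ⟨a, rfl⟩ := mem_span_singleton.1 hx2
        by_cases ha : a = 0
        · simp [ha]
        · exact absurd ((Submodule.smul_mem_iff W ha).1 hx) huW
      rw [h3, finrank_bot, finrank_span_singleton hu0, hW] at h2
      omega
    have h4 := h1 _ hdim
    have h5 : U ⊓ W.restrictScalars K < U ⊓ (W ⊔ span L {u}).restrictScalars K := by
      refine lt_of_le_of_ne ?_ ?_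
      · intro x hx
        exact ⟨hx.1, (le_sup_left : W ≤ W ⊔ span L {u}) hx.2⟩
      · intro heq
        have : u ∈ U ⊓ (W ⊔ span L {u}).restrictScalars K :=
          ⟨huU, (le_sup_right : span L {u} ≤ W ⊔ span L {u}) (mem_span_singleton_self u)⟩
        rw [← heq] at this
        exact huW this.2
    have h6 := Submodule.finrank_lt_finrank_of_lt h5
    omega

theorem aux_span_ge {K L : Type} [Field K] [Field L] [Algebra K L] [FiniteDimensional K L]
    {k h : ℕ} (hk : h < k) (U : Submodule K (Fin k → L))
    (hsp : ∀ lam : Fin k → L, (∀ u ∈ U, ∑ i, lam i * u i = 0) → lam = 0)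
    (hU : IsEvasive K L U h h) (V : Submodule K (Fin k → L)) (hV : V ≤ U)
    (hd : finrank K V ≤ h + 1) : finrank K V ≤ finrank L (span L (V : Set (Fin k → L))) := by
  by_cases hc : finrank L (span L (V : Set (Fin k → L))) ≤ h
  · have h1 := aux_evasive_s16 hk U hsp hU (h - finrank L (span L (V : Set (Fin k → L))))
      (finrank L (span L (V : Set (Fin k → L)))) (by omega) _ rfl
    refine le_trans (Submodule.finrank_mono ?_) h1
    exact fun x hx => ⟨hV hx, subset_span hx⟩
  · omega

/-- relation lemma -/
theorem aux_rel {K L : Type} [Field K] [Field L] [Algebra K L] [FiniteDimensional K L]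
    {k r : ℕ} (e : Fin r → L) (he : LinearIndependent K e) (w : Fin r → Fin k → L)
    (hw : finrank K (span K (Set.range w)) ≤
      finrank L (span L ((span K (Set.range w) : Submodule K (Fin k → L)) : Set (Fin k → L))))
    (h0 : ∑ l, e l • w l = 0) : ∀ l, w l = 0 := by
  set V := span K (Set.range w) with hV
  let b := finBasis K V
  let b' : Fin (finrank K V) → Fin k → L := fun i => b i
  have hbspan : span K (Set.range b') = V := by
    have h1 := b.span_eq
    have h2 := congrArg (Submodule.map V.subtype) h1
    rw [Submodule.map_span, Submodule.map_top, range_subtype, ← Set.range_comp] at h2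
    exact h2
  have hbL : span L (V : Set (Fin k → L)) = span L (Set.range b') := by
    rw [← Submodule.span_span_of_tower K L (Set.range b'), hbspan]
  have hli : LinearIndependent L b' := by
    rw [linearIndependent_iff_card_le_finrank_span, Fintype.card_fin]
    rw [hbL] at hw
    exact hw
  have hmem : ∀ l, w l ∈ V := fun l => subset_span ⟨l, rfl⟩
  have hexp : ∀ l, w l = ∑ i, b.repr ⟨w l, hmem l⟩ i • b' i := by
    intro l
    have := congrArg (Subtype.val) (b.sum_repr ⟨w l, hmem l⟩)
    simp only [Submodule.coe_sum, Submodule.coe_smul] at this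
    exact this.symm
  have h2 : ∑ i, (∑ l, b.repr ⟨w l, hmem l⟩ i • e l) • b' i = 0 := by
    rw [← h0]
    simp only [Finset.sum_smul]
    rw [Finset.sum_comm]
    refine Finset.sum_congr rfl fun l _ => ?_
    conv_rhs => rw [hexp l]
    rw [Finset.smul_sum]
    refine Finset.sum_congr rfl fun i _ => ?_
    rw [smul_assoc, smul_comm]
  have h3 := Fintype.linearIndependent_iff.1 hli _ h2
  intro l
  rw [hexp l]
  refine Finset.sum_eq_zero fun i _ => ?_
  rw [Fintype.linearIndependent_iff.1 he _ (h3 i) l, zero_smul]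

/-- a nonzero codeword has weight at least `k` -/
theorem aux_mindist {K L : Type} [Field K] [Field L] [Algebra K L] [FiniteDimensional K L]
    [Algebra.IsSeparable K L]
    {k : ℕ} (hk : 2 ≤ k) (hm : finrank K L = 2 * k - 2) (G : Fin k → Fin (2 * k) → L)
    (hcol : LinearIndependent K (fun j : Fin (2 * k) => fun i : Fin k => G i j))
    (U : Submodule K (Fin k → L))
    (hUF : U = LinearMap.range (Fintype.linearCombination K (fun j : Fin (2 * k) => fun i : Fin k => G i j)))
    (hsp : ∀ lam : Fin k → L, (∀ u ∈ U, ∑ i, lam i * u i = 0) → lam = 0)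
    (hU : IsEvasive K L U (k - 2) (k - 2)) (t : ℕ) (ht : t < k)
    (a : Fin t → Fin (2 * k) → K) (mu : Fin t → L) (lam : Fin k → L)
    (hc : Fintype.linearCombination L G lam = ∑ i, mu i • (fun j => algebraMap K L (a i j))) :
    lam = 0 := by
  classical
  set F := Fintype.linearCombination K (fun j : Fin (2 * k) => fun i : Fin k => G i j) with hF
  -- the annihilator of `mu`
  let T : L →ₗ[K] (Fin t → K) := LinearMap.pi fun i => Algebra.traceForm K L (mu i)
  have hTd : k - 1 ≤ finrank K (LinearMap.ker T) := by
    have h1 := LinearMap.finrank_range_add_finrank_ker T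
    have h2 := Submodule.finrank_le (LinearMap.range T)
    rw [Module.finrank_fin_fun] at h2
    omega
  obtain ⟨e, he⟩ : ∃ e : Fin (k - 1) → LinearMap.ker T, LinearIndependent K e :=
    exists_linearIndependent_of_le_finrank hTd
  have he' : LinearIndependent K (fun l => (e l : L)) := he.map' _ (ker_subtype _)
  let psi : (Fin (k - 1) → Fin (2 * k) → K) →ₗ[K] (Fin k → L) :=
    { toFun := fun w => ∑ l, (e l : L) • F (w l)
      map_add' := by intro x y; simp [Finset.sum_add_distrib]
      map_smul' := by
        intro c x
        simp only [Pi.smul_apply, map_smul, RingHom.id_apply, Finset.smul_sum]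
        exact Finset.sum_congr rfl fun l _ => smul_comm _ _ _ }
  have hinj : Function.Injective psi := by
    rw [← LinearMap.ker_eq_bot, LinearMap.ker_eq_bot']
    intro w hw
    have hle : finrank K (span K (Set.range fun l => F (w l))) ≤ k - 1 := by
      have := finrank_range_le_card (R := K) (fun l => F (w l))
      simpa [Set.finrank] using this
    have h2 := aux_rel (fun l => (e l : L)) he' (fun l => F (w l))
      (aux_span_ge (h := k - 2) (by omega) U hsp hU _ (by
        rw [span_le]
        rintro _ ⟨l, rfl⟩
        rw [hUF]
        exact ⟨_, rfl⟩) (by omega)) hw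
    funext l
    have hFi : Function.Injective F := linearIndependent_iff_injective_fintypeLinearCombination.1 hcol
    apply hFi
    rw [h2 l]
    simp
  have hsurj : Function.Surjective psi := by
    rw [← LinearMap.injective_iff_surjective_of_finrank_eq_finrank]
    · exact hinj
    · rw [Module.finrank_pi_fintype, Module.finrank_pi_fintype K (M := fun _ : Fin k => L)]
      simp only [Module.finrank_fin_fun, hm, Finset.sum_const, Finset.card_univ, Fintype.card_fin,
        smul_eq_mul]
      obtain ⟨j, rfl⟩ : ∃ j, k = j + 2 := ⟨k - 2, by omega⟩
      have e1 : j + 2 - 1 = j + 1 := by omega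
      have e2 : 2 * (j + 2) - 2 = 2 * (j + 1) := by omega
      rw [e1, e2]; ring
  have htr : ∀ z : Fin k → L, Algebra.trace K L (∑ i, lam i * z i) = 0 := by
    intro z
    obtain ⟨w, rfl⟩ := hsurj z
    have h1 : ∑ i, lam i * (psi w) i = ∑ l, (e l : L) * ∑ j, algebraMap K L (w l j) *
        (∑ i, mu i * algebraMap K L (a i j)) := by
      have : ∀ l, ∑ j, algebraMap K L (w l j) * (∑ i, mu i * algebraMap K L (a i j)) =
          ∑ i, lam i * F (w l) i := by
        intro l
        rw [hF, aux_pair, hc]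
        simp
      simp only [this]
      simp only [psi, LinearMap.coe_mk, AddHom.coe_mk, Finset.sum_apply, Pi.smul_apply,
        smul_eq_mul, Finset.mul_sum]
      rw [Finset.sum_comm]
      exact Finset.sum_congr rfl fun l _ => Finset.sum_congr rfl fun i _ => by ring
    rw [h1, map_sum]
    refine Finset.sum_eq_zero fun l _ => ?_
    simp only [Finset.mul_sum, map_sum]
    refine Finset.sum_eq_zero fun j _ => Finset.sum_eq_zero fun i _ => ?_
    have h3 : Algebra.trace K L (mu i * e l) = 0 := congrFun (LinearMap.mem_ker.1 (e l).2) i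
    have h4 : (e l : L) * (algebraMap K L (w l j) * (mu i * algebraMap K L (a i j))) =
        (w l j * a i j) • (mu i * e l) := by
      rw [Algebra.smul_def, map_mul]; ring
    rw [h4, map_smul, h3, smul_zero]
  funext i
  by_contra hi
  obtain ⟨x, hx⟩ := Algebra.trace_surjective K L 1
  have h5 := htr (Pi.single i ((lam i)⁻¹ * x))
  rw [Finset.sum_eq_single i] at h5
  · rw [Pi.single_eq_same, mul_inv_cancel_left₀ hi, hx] at h5
    exact one_ne_zero h5
  · intro j _ hj; simp [hj]
  · simp

/-- existence of a low weight codeword -/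
theorem aux_singleton_s16 {K L : Type} [Field K] [Field L] [Algebra K L] [FiniteDimensional K L]
    {k : ℕ} (hk : 2 ≤ k) (hm : finrank K L = 2 * k - 2) (G : Fin k → Fin (2 * k) → L) :
    ∃ lam : Fin k → L, lam ≠ 0 ∧ ∃ (a : Fin k → Fin (2 * k) → K) (mu : Fin k → L),
      Fintype.linearCombination L G lam = ∑ i, mu i • (fun j => algebraMap K L (a i j)) := by
  classical
  obtain ⟨mu, hmu⟩ : ∃ e : Fin k → L, LinearIndependent K e :=
    exists_linearIndependent_of_le_finrank (by omega)
  let X := span K (Set.range mu)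
  have hX : finrank K X = k := by
    have := finrank_span_eq_card hmu
    simpa using this
  have hQ : finrank K (L ⧸ X) = k - 2 := by
    have := Submodule.finrank_quotient_add_finrank X
    omega
  let T : (Fin k → L) →ₗ[K] (Fin (2 * k) → L ⧸ X) :=
    LinearMap.pi fun j => X.mkQ ∘ₗ LinearMap.proj j ∘ₗ
      (Fintype.linearCombination L G).restrictScalars K
  have hker : LinearMap.ker T ≠ ⊥ := by
    apply LinearMap.ker_ne_bot_of_finrank_lt
    rw [Module.finrank_pi_fintype, Module.finrank_pi_fintype]
    simp only [hQ, hm, Finset.sum_const, Finset.card_univ, Fintype.card_fin, smul_eq_mul]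
    obtain ⟨j, rfl⟩ : ∃ j, k = j + 2 := ⟨k - 2, by omega⟩
    have e1 : j + 2 - 2 = j := by omega
    have e2 : 2 * (j + 2) - 2 = 2 * (j + 1) := by omega
    rw [e1, e2]; nlinarith
  obtain ⟨lam, hl, hl0⟩ := Submodule.exists_mem_ne_zero_of_ne_bot hker
  refine ⟨lam, hl0, ?_⟩
  have hmem : ∀ j, Fintype.linearCombination L G lam j ∈ X := by
    intro j
    have := congrFun (LinearMap.mem_ker.1 hl) j
    exact (Submodule.Quotient.mk_eq_zero X).1 this
  choose a ha using fun j => (Submodule.mem_span_range_iff_exists_fun K).1 (hmem j)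
  refine ⟨fun i j => a j i, mu, ?_⟩
  funext j
  rw [← ha j, Finset.sum_apply]
  refine Finset.sum_congr rfl fun i _ => ?_
  simp [Algebra.smul_def, mul_comm]

theorem aux_finrank_map {L V W : Type} [Field L] [AddCommGroup V] [Module L V] [AddCommGroup W]
    [Module L W] (f : V →ₗ[L] W) (hf : Function.Injective f) (A : Submodule L V) :
    finrank L (A.map f) = finrank L A :=
  (Submodule.equivMapOfInjective f hf A).finrank_eq.symm

theorem aux_gc_dual {K L : Type} [Field K] [Field L] [Algebra K L] {n r : ℕ}
    (b : Fin r → Fin n → K) :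
    GaloisClosed K L (dualCode L (span L (Set.range (fun i => fun j => algebraMap K L (b i j))))) := by
  intro θ v hv c hc
  have h1 := aux_gc_span (L := L) b θ.symm c hc
  have h2 := congrArg θ (hv _ h1)
  simpa using h2

theorem aux_gc_zero {K L : Type} [Field K] [Field L] [Algebra K L] {n r s k : ℕ}
    (C : Submodule L (Fin n → L)) (hC : finrank L C = k) (hr : r ≤ n) (hs : r + s = k) :
    grw K L C s ≤ n - k + s := by
  classical
  have hrn : k ≤ n := by
    have := Submodule.finrank_le C
    rw [hC, Module.finrank_fin_fun] at this
    exact this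
  let b : Fin r → Fin n → K := fun i => Pi.single (Fin.castLE hr i) 1
  have hb : LinearIndependent K b := by
    have := (Pi.basisFun K (Fin n)).linearIndependent.comp (Fin.castLE hr)
      (Fin.castLE_injective hr)
    convert! this using 1
    funext i
    simp [b]
  have hbL := aux_liftLI (L := L) b hb
  set B := span L (Set.range (fun i => fun j => algebraMap K L (b i j))) with hB
  have hBd : finrank L B = r := by
    have := finrank_span_eq_card hbL
    simpa using this
  have hd := aux_finrank_dual B
  have hAd : finrank L (dualCode L B) = n - k + s := by omega
  refine Nat.sInf_le ⟨dualCode L B, aux_gc_dual b, ?_, hAd⟩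
  have h1 := Submodule.finrank_sup_add_finrank_inf_eq (dualCode L B) C
  have h2 := Submodule.finrank_le (dualCode L B ⊔ C)
  rw [Module.finrank_fin_fun] at h2
  omega

set_option maxHeartbeats 2000000 in
/-- for `m = 2k-2` and `n = 2k`, `C` is near MRD iff its associated system is
`(k-2)`-scattered. -/
theorem stmt16 [Fintype Fq] (k : ℕ) (hk : 2 ≤ k) (hm : finrank Fq Fqm = 2 * k - 2)
    (C : Submodule Fqm (Fin (2 * k) → Fqm)) (hdim : finrank Fqm ↥C = k)
    (hnd : IsNondegenerate Fq Fqm k C)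
    (U : Submodule Fq (Fin k → Fqm)) (hU : IsAssociatedSystem Fq Fqm C U) :
    IsNearMRD Fq Fqm k C ↔ IsEvasive Fq Fqm U (k - 2) (k - 2) := by
  classical
  have hfd : FiniteDimensional Fq Fqm := FiniteDimensional.of_finrank_pos (by omega)
  have hfin : Finite Fqm := Module.finite_of_finite Fq
  have hgal : IsGalois Fq Fqm := inferInstance
  obtain ⟨G, hGC, hUG⟩ := hU
  obtain ⟨G', hGC', hG'⟩ := hnd
  unfold IsGenMatrix at hGC hGC'
  set u : Fin (2 * k) → Fin k → Fqm := fun j i => G i j with hu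
  set F := Fintype.linearCombination Fq u with hF
  set E := Fintype.linearCombination Fqm G with hE
  have hER : LinearMap.range E = C := by rw [hE, Fintype.range_linearCombination, hGC]
  have hFR : LinearMap.range F = U := by rw [hF, Fintype.range_linearCombination, hUG]
  have hG : LinearIndependent Fqm G := by
    rw [linearIndependent_iff_card_le_finrank_span, Fintype.card_fin]
    have : Set.finrank Fqm (Set.range G) = finrank Fqm C := by rw [hGC]; rfl
    omega
  have hEi : Function.Injective E := linearIndependent_iff_injective_fintypeLinearCombination.1 hG
  have hcol' : LinearIndependent Fq (fun j : Fin (2 * k) => fun i : Fin k => G' i j) := by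
    rw [linearIndependent_iff_card_le_finrank_span, Fintype.card_fin]
    exact hG'.ge
  have hcol : LinearIndependent Fq u := by
    rw [Fintype.linearIndependent_iff] at hcol' ⊢
    intro p hp
    apply hcol'
    have h1 : ∀ c ∈ C, ∑ j, algebraMap Fq Fqm (p j) * c j = 0 := by
      intro c hc
      rw [← hER] at hc
      obtain ⟨lam, rfl⟩ := hc
      rw [hE, ← aux_pair]
      have : Fintype.linearCombination Fq u p = 0 := hp
      simp only [← hu, this]
      simp
    funext i
    have h2 := h1 (G' i) (by rw [hGC']; exact subset_span ⟨i, rfl⟩)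
    rw [Finset.sum_apply]
    simpa [Algebra.smul_def] using h2
  have hFi : Function.Injective F := linearIndependent_iff_injective_fintypeLinearCombination.1 hcol
  have hsp : ∀ lam : Fin k → Fqm, (∀ u ∈ U, ∑ i, lam i * u i = 0) → lam = 0 := by
    intro lam hl
    apply hEi
    rw [map_zero]
    funext j
    have h1 := hl (u j) (by rw [hUG]; exact subset_span ⟨j, rfl⟩)
    rw [hE, Fintype.linearCombination_apply, Finset.sum_apply]
    exact h1
  constructor
  · rintro ⟨-, h2⟩ W hW
    have hd2 := h2 2 le_rfl hk
    let P := (W.restrictScalars Fq).comap F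
    have hP : finrank Fq ↥(U ⊓ W.restrictScalars Fq) = finrank Fq P := by
      rw [← aux_finrank_map F hFi P, Submodule.map_comap_eq, hFR]
    rw [hP]
    let b := finBasis Fq P
    let b' : Fin (finrank Fq P) → Fin (2 * k) → Fq := fun i => b i
    have hb' : LinearIndependent Fq b' := b.linearIndependent.map' _ (ker_subtype _)
    have hbL := aux_liftLI (L := Fqm) b' hb'
    set B := span Fqm (Set.range (fun i => fun j => algebraMap Fq Fqm (b' i j))) with hB
    have hBd : finrank Fqm B = finrank Fq P := by
      have := finrank_span_eq_card hbL
      simpa using this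
    have hd := aux_finrank_dual B
    have hW2 := aux_finrank_dual W
    have hle : (dualCode Fqm W).map E ≤ dualCode Fqm B ⊓ C := by
      rintro _ ⟨lam, hl, rfl⟩
      refine ⟨?_, hER ▸ ⟨lam, rfl⟩⟩
      intro c hc
      induction hc using Submodule.span_induction with
      | mem x hx =>
        obtain ⟨i, rfl⟩ := hx
        rw [hE, ← aux_pair]
        have h3 : F (b' i) ∈ W := (b i).2
        have h4 := hl _ h3
        rw [← h4]
        exact Finset.sum_congr rfl fun i _ => mul_comm _ _
      | zero => simp
      | add x y _ _ hx hy => simp only [Pi.add_apply, add_mul, Finset.sum_add_distrib, hx, hy, add_zero]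
      | smul a x _ hx => simp only [Pi.smul_apply, smul_eq_mul, mul_assoc, ← Finset.mul_sum, hx, mul_zero]
    have h5 := Submodule.finrank_mono hle
    rw [aux_finrank_map E hEi] at h5
    have h6 : grw Fq Fqm C 2 ≤ finrank Fqm (dualCode Fqm B) :=
      Nat.sInf_le ⟨dualCode Fqm B, aux_gc_dual b', by omega, rfl⟩
    omega
  · intro hev
    have hne : ∀ s, s ≤ k → {x : ℕ | ∃ A : Submodule Fqm (Fin (2 * k) → Fqm),
        GaloisClosed Fq Fqm A ∧ s ≤ finrank Fqm ↥(A ⊓ C) ∧ finrank Fqm ↥A = x}.Nonempty := by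
      intro s hs
      refine ⟨_, ⊤, fun θ v _ => trivial, ?_, rfl⟩
      rw [top_inf_eq, hdim]
      exact hs
    refine ⟨le_antisymm ?_ ?_, ?_⟩
    · obtain ⟨lam, hl0, a, mu, hc⟩ := aux_singleton_s16 (K := Fq) hk hm G
      set A := span Fqm (Set.range (fun i => fun j => algebraMap Fq Fqm (a i j))) with hA
      have h1 : finrank Fqm A ≤ k := by
        have := finrank_range_le_card (R := Fqm) (fun i => fun j => algebraMap Fq Fqm (a i j))
        simpa [Set.finrank] using this
      have h2 : grw Fq Fqm C 1 ≤ finrank Fqm A := by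
        refine Nat.sInf_le ⟨_, aux_gc_span a, ?_, rfl⟩
        rw [Nat.one_le_iff_ne_zero]
        intro h0
        rw [Submodule.finrank_eq_zero] at h0
        have h3 : E lam ∈ A ⊓ C := by
          refine ⟨?_, hER ▸ ⟨lam, rfl⟩⟩
          rw [hE, hc]
          exact sum_mem fun i _ => smul_mem _ _ (subset_span ⟨i, rfl⟩)
        rw [hA, h0, Submodule.mem_bot] at h3
        exact hl0 (hEi (h3.trans (map_zero E).symm))
      omega
    · refine le_csInf (hne 1 (by omega)) ?_
      rintro x ⟨A, hAg, hAs, rfl⟩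
      by_contra hlt
      obtain ⟨a, ha⟩ := aux_descent A hAg
      have hnb : A ⊓ C ≠ ⊥ := by
        intro h0
        rw [h0, finrank_bot] at hAs
        omega
      obtain ⟨c, hc, hc0⟩ := Submodule.exists_mem_ne_zero_of_ne_bot hnb
      have hcC := hc.2
      have hcA : c ∈ span Fqm (Set.range (fun i => fun j => algebraMap Fq Fqm (a i j))) :=
        ha.le hc.1
      rw [← hER] at hcC
      obtain ⟨lam, rfl⟩ := hcC
      obtain ⟨mu, hmu⟩ := (Submodule.mem_span_range_iff_exists_fun Fqm).1 hcA
      have := aux_mindist hk hm G hcol U hFR.symm hsp hev _ (by omega) a mu lam hmu.symm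
      exact hc0 (by rw [this, map_zero])
    · intro s hs2 hsk
      apply le_antisymm
      · exact aux_gc_zero (r := k - s) C hdim (by omega) (by omega)
      · refine le_csInf (hne s hsk) ?_
        rintro x ⟨A, hAg, hAs, rfl⟩
        obtain ⟨a, ha⟩ := aux_descent A hAg
        have hLam : finrank Fqm (A.comap E) = finrank Fqm ↥(A ⊓ C) := by
          rw [← aux_finrank_map E hEi, Submodule.map_comap_eq, hER, inf_comm]
        have hPd := aux_finrank_dual (span Fq (Set.range a))
        have hPa : finrank Fq (span Fq (Set.range a)) ≤ finrank Fqm A := by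
          have := finrank_range_le_card (R := Fq) a
          simpa [Set.finrank] using this
        have hWd := aux_finrank_dual (A.comap E)
        have hle : (dualCode Fq (span Fq (Set.range a))).map F ≤
            U ⊓ (dualCode Fqm (A.comap E)).restrictScalars Fq := by
          rintro _ ⟨p, hp, rfl⟩
          refine ⟨hFR ▸ ⟨p, rfl⟩, ?_⟩
          intro lam hl
          rw [hF, hu, aux_pair]
          have hl' : E lam ∈ span Fqm (Set.range (fun i => fun j => algebraMap Fq Fqm (a i j))) :=
            ha.le hl
          obtain ⟨mu, hmu⟩ := (Submodule.mem_span_range_iff_exists_fun Fqm).1 hl'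
          rw [← hE, ← hmu]
          simp only [Finset.sum_apply, Pi.smul_apply, smul_eq_mul, Finset.mul_sum]
          rw [Finset.sum_comm]
          refine Finset.sum_eq_zero fun i _ => ?_
          have h7 := congrArg (algebraMap Fq Fqm) (hp (a i) (subset_span ⟨i, rfl⟩))
          rw [map_sum, map_zero] at h7
          have h8 : ∀ j, algebraMap Fq Fqm (p j) * (mu i * algebraMap Fq Fqm (a i j)) =
              mu i * algebraMap Fq Fqm (a i j * p j) := by
            intro j; rw [map_mul]; ring
          simp only [h8, ← Finset.mul_sum, h7, mul_zero]
        have h9 := Submodule.finrank_mono hle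
        rw [aux_finrank_map F hFi] at h9
        have h10 := aux_evasive_s16 (h := k - 2) (by omega) U hsp hev
          (k - 2 - finrank Fqm (dualCode Fqm (A.comap E)))
          (finrank Fqm (dualCode Fqm (A.comap E))) (by omega) _ rfl
        omega
end
end

section
/- Assume m ≥ k ≥ 2. Then the set U := {(α+λ, α^q, α^{q²}, …, α^{q^{k−1}}) : α ∈ 𝔽_{q^m}, λ ∈ 𝔽_q} ⊆ 𝔽_{q^m}^k is an [m+1,k]_{q^m/q} system (i.e., an 𝔽_q-subspace of 𝔽_q-dimension m+1 whose 𝔽_{q^m}-span is 𝔽_{q^m}^k), and U is (k−2)-scattered and (k−1,k)-evasive. -/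
open Module Submodule

noncomputable section

variable (Fq Fqm : Type) [Field Fq] [Field Fqm] [Algebra Fq Fqm]

section helpers17

open Polynomial in
theorem h17_roots [Fintype Fq] [FiniteDimensional Fq Fqm] (h : ℕ) (c : Fin (h + 1) → Fqm)
    (hc : c ≠ 0) (Z : Submodule Fq Fqm)
    (hZ : ∀ z ∈ Z, ∑ i, c i * z ^ Fintype.card Fq ^ (i : ℕ) = 0) : finrank Fq Z ≤ h := by
  classical
  have : Finite Fqm := Module.finite_of_finite Fq
  have := Fintype.ofFinite Fqm
  have hq : 1 < Fintype.card Fq := Fintype.one_lt_card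
  let P : Fqm[X] := ∑ i : Fin (h + 1), C (c i) * X ^ Fintype.card Fq ^ (i : ℕ)
  have hP : P ≠ 0 := by
    intro h0
    apply hc
    funext j
    have := congrArg (fun p => coeff p (Fintype.card Fq ^ (j : ℕ))) h0
    simp only [P, finset_sum_coeff, coeff_C_mul, coeff_X_pow, coeff_zero] at this
    rw [Finset.sum_eq_single j] at this
    · simpa using this
    · intro b _ hb
      rw [if_neg, mul_zero]
      intro h1
      exact hb (Fin.ext (Nat.pow_right_injective hq h1).symm)
    · simp
  have hdeg : P.natDegree ≤ Fintype.card Fq ^ h := by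
    apply natDegree_sum_le_of_forall_le
    intro i _
    refine (natDegree_C_mul_X_pow_le _ _).trans ?_
    exact Nat.pow_le_pow_right hq.le (Nat.lt_succ_iff.mp i.2)
  have hcard := card_le_degree_of_subset_roots (p := P)
    (Z := Finset.univ.filter (fun z => z ∈ Z)) (by
      intro z hz
      have hz' : z ∈ Z := by simpa using hz
      rw [mem_roots hP, IsRoot.def]
      simpa [P, eval_finset_sum] using hZ z hz')
  have h2 : (Finset.univ.filter (fun z => z ∈ Z)).card = Fintype.card Fq ^ finrank Fq Z := by
    rw [← Module.card_eq_pow_finrank (K := Fq) (V := Z), ← Fintype.card_subtype]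
  rw [h2] at hcard
  exact (Nat.pow_le_pow_iff_right hq).mp (hcard.trans hdeg)

def gab17 [Fintype Fq] (n : ℕ) : Fqm →ₗ[Fq] (Fin n → Fqm) :=
  LinearMap.pi fun i => ((FiniteField.frobeniusAlgHom Fq Fqm) ^ (i : ℕ)).toLinearMap

theorem gab17_apply [Fintype Fq] (n : ℕ) (a : Fqm) (i : Fin n) :
    gab17 Fq Fqm n a i = a ^ Fintype.card Fq ^ (i : ℕ) := by
  simp [gab17, FiniteField.coe_frobeniusAlgHom, AlgHom.coe_pow, pow_iterate]

theorem h17_gab [Fintype Fq] [FiniteDimensional Fq Fqm] (n : ℕ)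
    (W : Submodule Fqm (Fin n → Fqm)) (hW : finrank Fqm W < n) :
    finrank Fq ((W.restrictScalars Fq).comap (gab17 Fq Fqm n)) ≤ finrank Fqm W := by
  set h := finrank Fqm W with hh
  let T : (Fin n → Fqm) →ₗ[Fqm] (Fin (h + 1) → Fqm) :=
    LinearMap.funLeft Fqm Fqm (Fin.castLE hW)
  have hlt : W.map T < ⊤ := by
    rw [lt_top_iff_ne_top]
    intro h0
    have h1 := Submodule.finrank_map_le T W
    rw [h0, finrank_top] at h1
    simp at h1
    omega
  obtain ⟨f, hf, hle⟩ := Submodule.exists_le_ker_of_lt_top _ hlt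
  have hfs : ∀ v, f v = ∑ i, f (Pi.single i 1) * v i := by
    intro v
    conv_lhs => rw [pi_eq_sum_univ' v]
    rw [map_sum]
    refine Finset.sum_congr rfl fun i _ => ?_
    rw [map_smul, smul_eq_mul, mul_comm]
  apply h17_roots Fq Fqm h (fun i => f (Pi.single i 1))
  · intro h0
    apply hf
    ext v
    simpa using congrFun h0 v
  · intro z hz
    have hz : gab17 Fq Fqm n z ∈ W := hz
    have h1 := hle (Submodule.mem_map_of_mem (f := T) hz)
    rw [LinearMap.mem_ker, hfs] at h1
    simpa [T, LinearMap.funLeft_apply, gab17_apply] using h1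

theorem h17_rn {K V V' : Type} [Field K] [AddCommGroup V] [Module K V] [AddCommGroup V']
    [Module K V'] [FiniteDimensional K V] (f : V →ₗ[K] V')
    (E : Submodule K V) :
    finrank K E = finrank K (E.map f) + finrank K (E ⊓ LinearMap.ker f : Submodule K V) := by
  rw [← LinearMap.finrank_range_add_finrank_ker (f.domRestrict E), LinearMap.range_domRestrict,
    LinearMap.ker_domRestrict, inf_comm,
    ← (Submodule.comap_equiv_self_of_inj_of_le (f := E.subtype) (p := LinearMap.ker f ⊓ E)
      E.injective_subtype (by simp)).finrank_eq]
  rw [Submodule.comap_inf, Submodule.comap_subtype_self, inf_top_eq]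

theorem h17_inj {K V V' : Type} [Field K] [AddCommGroup V] [Module K V] [AddCommGroup V']
    [Module K V'] (f : V →ₗ[K] V') (hf : Function.Injective f)
    (E : Submodule K V) : finrank K (E.map f) = finrank K E :=
  (Submodule.equivMapOfInjective f hf E).finrank_eq.symm

def phi17 [Fintype Fq] (k : ℕ) : (Fqm × Fq) →ₗ[Fq] (Fin k → Fqm) :=
  LinearMap.coprod (gab17 Fq Fqm k)
    (LinearMap.pi fun i => if (i : ℕ) = 0 then Algebra.linearMap Fq Fqm else 0)

theorem phi17_apply [Fintype Fq] (k : ℕ) (a : Fqm) (l : Fq) :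
    phi17 Fq Fqm k (a, l) = fun i : Fin k => if (i : ℕ) = 0 then a + algebraMap Fq Fqm l
      else a ^ Fintype.card Fq ^ (i : ℕ) := by
  funext i
  by_cases h : (i : ℕ) = 0 <;> simp [phi17, gab17_apply, h]

theorem phi17_inj [Fintype Fq] (k : ℕ) (hk : 2 ≤ k) : Function.Injective (phi17 Fq Fqm k) := by
  rw [← LinearMap.ker_eq_bot, LinearMap.ker_eq_bot']
  rintro ⟨a, l⟩ h
  rw [phi17_apply] at h
  have h1 := congrFun h ⟨1, by omega⟩
  have h0 := congrFun h ⟨0, by omega⟩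
  have ha : a = 0 := by simpa using h1
  subst ha
  simpa using h0

theorem phi17_tail [Fintype Fq] (n : ℕ) (a : Fqm) (l : Fq) :
    LinearMap.funLeft Fqm Fqm Fin.succ (phi17 Fq Fqm (n + 1) (a, l)) =
      gab17 Fq Fqm n (a ^ Fintype.card Fq) := by
  funext i
  rw [phi17_apply, gab17_apply]
  simp [LinearMap.funLeft_apply, ← pow_mul, pow_succ']

theorem h17_evA [Fintype Fq] [FiniteDimensional Fq Fqm] (k : ℕ)
    (W : Submodule Fqm (Fin k → Fqm)) (hW : finrank Fqm W < k) :
    finrank Fq ((W.restrictScalars Fq).comap (phi17 Fq Fqm k)) ≤ finrank Fqm W + 1 := by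
  rw [h17_rn (LinearMap.snd Fq Fqm Fq), add_comm]
  apply add_le_add
  · refine le_trans (Submodule.finrank_mono (t := ((W.restrictScalars Fq).comap
      (gab17 Fq Fqm k)).map (LinearMap.inl Fq Fqm Fq)) ?_) ?_
    · rintro ⟨a, l⟩ ⟨h1, h2⟩
      have h2 : l = 0 := h2
      subst h2
      refine ⟨a, ?_, rfl⟩
      have h1 : phi17 Fq Fqm k (a, 0) ∈ W := h1
      change gab17 Fq Fqm k a ∈ W
      simpa [phi17] using h1
    · rw [h17_inj _ LinearMap.inl_injective]
      exact h17_gab Fq Fqm k W hW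
  · exact (Submodule.finrank_le _).trans (by simp)

theorem h17_evB [Fintype Fq] [FiniteDimensional Fq Fqm] (n : ℕ)
    (W : Submodule Fqm (Fin (n + 1) → Fqm)) (hW : finrank Fqm W < n) :
    finrank Fq ((W.restrictScalars Fq).comap (phi17 Fq Fqm (n + 1))) ≤ finrank Fqm W := by
  classical
  let π : (Fin (n + 1) → Fqm) →ₗ[Fqm] (Fin n → Fqm) := LinearMap.funLeft Fqm Fqm Fin.succ
  let e : Fin (n + 1) → Fqm := Pi.single 0 1
  let Fr : Fqm →ₗ[Fq] Fqm := (FiniteField.frobeniusAlgHom Fq Fqm).toLinearMap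
  have hFr : Function.Injective Fr := (FiniteField.frobeniusAlgHom Fq Fqm).toRingHom.injective
  have hpi := h17_rn π W
  have hmap : finrank Fq (((W.restrictScalars Fq).comap (phi17 Fq Fqm (n + 1))).map
      (LinearMap.fst Fq Fqm Fq)) ≤ finrank Fqm (W.map π) := by
    refine le_trans ?_ (h17_gab Fq Fqm n (W.map π) (by omega))
    rw [← h17_inj Fr hFr]
    apply Submodule.finrank_mono
    rintro _ ⟨_, ⟨⟨a, l⟩, h1, rfl⟩, rfl⟩
    have h1 : phi17 Fq Fqm (n + 1) (a, l) ∈ W := h1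
    change gab17 Fq Fqm n (a ^ Fintype.card Fq) ∈ W.map π
    rw [← phi17_tail Fq Fqm n a l]
    exact Submodule.mem_map_of_mem h1
  have hphi : ∀ l : Fq, phi17 Fq Fqm (n + 1) (0, l) = algebraMap Fq Fqm l • e := by
    intro l
    rw [phi17_apply]
    funext i
    by_cases h : i = 0
    · subst h; simp [e]
    · have h' : (i : ℕ) ≠ 0 := fun h0 => h (Fin.ext h0)
      simp [e, h]
  rw [h17_rn (LinearMap.fst Fq Fqm Fq)]
  by_cases he : e ∈ W
  · have h1 : finrank Fq (((W.restrictScalars Fq).comap (phi17 Fq Fqm (n + 1))) ⊓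
        LinearMap.ker (LinearMap.fst Fq Fqm Fq) : Submodule Fq (Fqm × Fq)) ≤ 1 := by
      refine le_trans (Submodule.finrank_mono
        (t := (⊤ : Submodule Fq Fq).map (LinearMap.inr Fq Fqm Fq)) ?_) ?_
      · rintro ⟨a, l⟩ ⟨_, h2⟩
        have h2 : a = 0 := h2
        subst h2
        exact ⟨l, trivial, rfl⟩
      · rw [h17_inj _ LinearMap.inr_injective]
        simp
    have h2 : 1 ≤ finrank Fqm (W ⊓ LinearMap.ker π : Submodule Fqm (Fin (n + 1) → Fqm)) := by
      rw [Submodule.one_le_finrank_iff, Submodule.ne_bot_iff]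
      refine ⟨e, ⟨he, ?_⟩, ?_⟩
      · rw [SetLike.mem_coe, LinearMap.mem_ker]
        funext i
        simp [π, e, LinearMap.funLeft_apply]
      · simp [e]
    omega
  · have h1 : ((W.restrictScalars Fq).comap (phi17 Fq Fqm (n + 1))) ⊓
        LinearMap.ker (LinearMap.fst Fq Fqm Fq) = ⊥ := by
      rw [eq_bot_iff]
      rintro ⟨a, l⟩ ⟨h3, h2⟩
      have h2 : a = 0 := h2
      subst h2
      have h3 : phi17 Fq Fqm (n + 1) (0, l) ∈ W := h3
      rw [hphi] at h3
      by_cases hl : l = 0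
      · subst hl; simp
      · exact absurd ((W.smul_mem_iff (by simpa using hl)).mp h3) he
    rw [h1, finrank_bot]
    omega

end helpers17

/-- the set `{(α+λ, α^q, …, α^{q^{k-1}}) : α ∈ Fqm, λ ∈ Fq}` is an
`[m+1,k]` system which is `(k-2)`-scattered and `(k-1,k)`-evasive. -/
theorem stmt17 [Fintype Fq] (q m k : ℕ) (hq : Fintype.card Fq = q)
    (hm : finrank Fq Fqm = m) (hk : 2 ≤ k) (hkm : k ≤ m) :
    ∃ U : Submodule Fq (Fin k → Fqm),
      (U : Set (Fin k → Fqm)) =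
        {v | ∃ (α : Fqm) (l : Fq),
          v = fun i : Fin k => if (i : ℕ) = 0 then α + algebraMap Fq Fqm l else α ^ q ^ (i : ℕ)} ∧
      finrank Fq ↥U = m + 1 ∧
      span Fqm (U : Set (Fin k → Fqm)) = ⊤ ∧
      IsEvasive Fq Fqm U (k - 2) (k - 2) ∧ IsEvasive Fq Fqm U (k - 1) k := by
  subst hq
  have hfin : FiniteDimensional Fq Fqm := Module.finite_of_finrank_pos (by omega)
  have key : ∀ W : Submodule Fqm (Fin k → Fqm),
      finrank Fq ↥(LinearMap.range (phi17 Fq Fqm k) ⊓ W.restrictScalars Fq) =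
      finrank Fq ((W.restrictScalars Fq).comap (phi17 Fq Fqm k)) := by
    intro W
    rw [← h17_inj _ (phi17_inj Fq Fqm k hk), Submodule.map_comap_eq]
  refine ⟨LinearMap.range (phi17 Fq Fqm k), ?_, ?_, ?_, ?_, ?_⟩
  · ext v
    constructor
    · rintro ⟨⟨a, l⟩, rfl⟩
      exact ⟨a, l, phi17_apply Fq Fqm k a l⟩
    · rintro ⟨a, l, rfl⟩
      exact ⟨(a, l), phi17_apply Fq Fqm k a l⟩
  · rw [LinearMap.finrank_range_of_inj (phi17_inj Fq Fqm k hk)]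
    simp [hm]
  · by_contra hne
    have h1 := Submodule.finrank_lt hne
    rw [Module.finrank_fin_fun] at h1
    have h2 := h17_gab Fq Fqm k _ h1
    rw [(Submodule.eq_top_iff'.mpr ?_ : Submodule.comap _ _ = ⊤), finrank_top] at h2
    · omega
    · intro a
      refine Submodule.subset_span (R := Fqm) ⟨(a, 0), ?_⟩
      simp [phi17]
  · intro W hW
    obtain ⟨n, rfl⟩ : ∃ n, k = n + 1 := ⟨k - 1, by omega⟩
    rw [key, ← hW]
    exact h17_evB Fq Fqm n W (by omega)
  · intro W hW
    rw [key]
    have := h17_evA Fq Fqm k W (by omega)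
    omega
end
end

section
/- Let 1 ≤ k < n, let C be a nondegenerate [n,k]_{q^m/q} code, let U be a system associated to C, and let h be an integer with 0 ≤ h < k. Then U is h-scattered if and only if Rdef(C^⊥) ≤ ⌊km/n⌋ − h − 1, where Rdef(C^⊥) = m − ⌈(n−k)m/n⌉ − d(C^⊥) + 1 is the Singleton rank defect of the dual code. -/
open Module Submodule

noncomputable section

variable (Fq Fqm : Type) [Field Fq] [Field Fqm] [Algebra Fq Fqm]

theorem aux_gen {n k : ℕ} (C : Submodule Fqm (Fin n → Fqm)) (G : Fin k → Fin n → Fqm)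
    (hG : IsGenMatrix Fqm C G) (y : Fin n → Fqm) :
    (∀ c ∈ C, ∑ j, c j * y j = 0) ↔ ∀ i, ∑ j, G i j * y j = 0 := by
  unfold IsGenMatrix at hG
  constructor
  · intro h i
    exact h (G i) (hG ▸ subset_span ⟨i, rfl⟩)
  · intro h c hc
    rw [hG] at hc
    induction hc using Submodule.span_induction with
    | mem x hx => obtain ⟨i, rfl⟩ := hx; exact h i
    | zero => simp
    | add a b _ _ ha hb => simp [add_mul, Finset.sum_add_distrib, ha, hb]
    | smul t a _ ha =>
      have : ∑ j, (t • a) j * y j = t * ∑ j, a j * y j := by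
        rw [Finset.mul_sum]
        exact Finset.sum_congr rfl fun j _ => by simp [mul_assoc]
      rw [this, ha, mul_zero]

theorem aux_indep_iff {n k : ℕ} (G : Fin k → Fin n → Fqm) :
    LinearIndependent Fq (fun j : Fin n => fun i : Fin k => G i j) ↔
      ∀ x : Fin n → Fq, (∀ i, ∑ j, G i j * algebraMap Fq Fqm (x j) = 0) → x = 0 := by
  rw [Fintype.linearIndependent_iff]
  have key : ∀ x : Fin n → Fq, (∑ j, x j • (fun i : Fin k => G i j) = 0) ↔
      (∀ i, ∑ j, G i j * algebraMap Fq Fqm (x j) = 0) := by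
    intro x
    rw [funext_iff]
    refine forall_congr' fun i => ?_
    simp [Algebra.smul_def, mul_comm]
  constructor
  · intro h x hx
    exact funext (h x ((key x).2 hx))
  · intro h x hx
    exact congrFun (h x ((key x).1 hx))

theorem aux_step {k : ℕ} (U : Submodule Fq (Fin k → Fqm)) [FiniteDimensional Fq U]
    (hspan : span Fqm (U : Set (Fin k → Fqm)) = ⊤) (a : ℕ)
    (W : Submodule Fqm (Fin k → Fqm)) (hW : finrank Fqm W = a)
    (hUW : a + 1 ≤ finrank Fq ↥(U ⊓ W.restrictScalars Fq)) (b : ℕ) (hab : a ≤ b) (hbk : b ≤ k) :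
    ∃ W : Submodule Fqm (Fin k → Fqm), finrank Fqm W = b ∧
      b + 1 ≤ finrank Fq ↥(U ⊓ W.restrictScalars Fq) := by
  induction b, hab using Nat.le_induction with
  | base => exact ⟨W, hW, hUW⟩
  | succ b hab ih =>
    obtain ⟨W, hW, hUW⟩ := ih (by omega)
    have hne : ∃ u ∈ U, u ∉ W := by
      by_contra hcon
      push Not at hcon
      have : span Fqm (U : Set (Fin k → Fqm)) ≤ W := span_le.2 hcon
      rw [hspan, top_le_iff] at this
      rw [this, finrank_top] at hW
      simp at hW
      omega
    obtain ⟨u, huU, huW⟩ := hne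
    have hu0 : u ≠ 0 := fun h => huW (h ▸ W.zero_mem)
    refine ⟨W ⊔ span Fqm {u}, ?_, ?_⟩
    · have h1 := Submodule.finrank_sup_add_finrank_inf_eq W (span Fqm {u})
      have h2 : W ⊓ span Fqm {u} = ⊥ := by
        rw [← disjoint_iff]
        exact ((Submodule.disjoint_span_singleton' hu0).2 huW)
      rw [h2, finrank_bot, finrank_span_singleton hu0] at h1
      omega
    · have hlt : U ⊓ W.restrictScalars Fq < U ⊓ (W ⊔ span Fqm {u}).restrictScalars Fq := by
        refine lt_of_le_of_ne ?_ ?_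
        · intro x hx
          exact ⟨hx.1, Submodule.mem_sup_left hx.2⟩
        · intro heq
          have : u ∈ U ⊓ (W ⊔ span Fqm {u}).restrictScalars Fq :=
            ⟨huU, Submodule.mem_sup_right (mem_span_singleton_self u)⟩
          rw [← heq] at this
          exact huW this.2
      have : FiniteDimensional Fq ↥(U ⊓ (W ⊔ span Fqm {u}).restrictScalars Fq) :=
        Submodule.finiteDimensional_of_le inf_le_left
      have := Submodule.finrank_lt_finrank_of_lt hlt
      omega

theorem aux_A {n k : ℕ} (G : Fin k → Fin n → Fqm)
    (hind : LinearIndependent Fq (fun j : Fin n => fun i : Fin k => G i j))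
    (v : Fin n → Fqm) (hv0 : v ≠ 0) (hv : ∀ i, ∑ j, G i j * v j = 0) :
    ∃ (a : ℕ) (W : Submodule Fqm (Fin k → Fqm)), a + 1 ≤ rankWeight Fq Fqm v ∧
      finrank Fqm W = a ∧ rankWeight Fq Fqm v ≤ finrank Fq ↥(span Fq
        (Set.range fun j : Fin n => fun i : Fin k => G i j) ⊓ W.restrictScalars Fq) := by
  set S := span Fq (Set.range v) with hS
  have hvS : ∀ j, v j ∈ S := fun j => subset_span ⟨j, rfl⟩
  have hfS : FiniteDimensional Fq S := FiniteDimensional.span_of_finite Fq (Set.finite_range v)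
  set w := rankWeight Fq Fqm v with hw
  have hwS : finrank Fq S = w := rfl
  let b : Basis (Fin w) Fq S := finBasisOfFinrankEq Fq S hwS
  let g : Fin n → Fin k → Fqm := fun j i => G i j
  let M : Fin w → Fin n → Fq := fun t j => b.repr ⟨v j, hvS j⟩ t
  let u : Fin w → Fin k → Fqm := fun t => ∑ j, M t j • g j
  have hvb : ∀ j, v j = ∑ t, M t j • (b t : Fqm) := by
    intro j
    have := congrArg (Subtype.val) (b.sum_repr ⟨v j, hvS j⟩)
    simp only [Submodule.coe_sum, Submodule.coe_smul] at this
    exact this.symm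
  have huU : ∀ t, u t ∈ span Fq (Set.range g) := fun t =>
    Submodule.sum_mem _ fun j _ => Submodule.smul_mem _ _ (subset_span ⟨j, rfl⟩)
  have hui : LinearIndependent Fq u := by
    rw [Fintype.linearIndependent_iff]
    intro c hc
    have h1 : ∑ j, (∑ t, c t * M t j) • g j = 0 := by
      rw [← hc]
      simp only [u, Finset.smul_sum, Finset.sum_smul, smul_smul]
      exact Finset.sum_comm
    have h2 := (Fintype.linearIndependent_iff.1 hind) _ h1
    let l : S →ₗ[Fq] Fq := b.constr Fq c
    have hl : ∀ j, l ⟨v j, hvS j⟩ = 0 := by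
      intro j
      rw [← h2 j]
      simp only [l, Basis.constr_apply_fintype, M, Basis.equivFun_apply, smul_eq_mul]
      exact Finset.sum_congr rfl fun t _ => mul_comm _ _
    have hl0 : ∀ x (hx : x ∈ S), l ⟨x, hx⟩ = 0 := by
      intro x hx
      induction hx using Submodule.span_induction with
      | mem x hx => obtain ⟨j, rfl⟩ := hx; exact hl j
      | zero => exact map_zero l
      | add x y hx hy h1 h2 =>
        have : l (⟨x, hx⟩ + ⟨y, hy⟩) = 0 := by rw [map_add, h1, h2, add_zero]
        exact this
      | smul r x hx h1 =>
        have : l (r • ⟨x, hx⟩) = 0 := by rw [map_smul, h1, smul_zero]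
        exact this
    intro t
    have := hl0 (b t) (b t).2
    simpa [l] using this
  have hdep : ∑ t, (b t : Fqm) • u t = 0 := by
    funext i
    have : ∀ i, (∑ t, (b t : Fqm) • u t) i = ∑ j, G i j * v j := by
      intro i
      simp only [Finset.sum_apply, Pi.smul_apply, u, hvb, g, Finset.mul_sum, smul_eq_mul,
        Algebra.smul_def]
      rw [Finset.sum_comm]
      refine Finset.sum_congr rfl fun j _ => Finset.sum_congr rfl fun t _ => ?_
      simp only [Pi.mul_apply, Pi.algebraMap_apply, Algebra.algebraMap_self, RingHom.id_apply]
      ring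
    rw [this, hv i]; rfl
  have hwpos : 0 < w := by
    obtain ⟨j, hj⟩ := Function.ne_iff.1 hv0
    rw [← hwS]
    have : Nontrivial S := ⟨⟨⟨v j, hvS j⟩, 0, fun h => hj (congrArg Subtype.val h)⟩⟩
    exact finrank_pos
  have hnli : ¬ LinearIndependent Fqm u := by
    intro h
    have := (Fintype.linearIndependent_iff.1 h) _ hdep ⟨0, hwpos⟩
    exact b.ne_zero ⟨0, hwpos⟩ (Subtype.ext this)
  refine ⟨_, span Fqm (Set.range u), ?_, rfl, ?_⟩
  · have h1 : (Set.range u).finrank Fqm ≤ w := by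
      simpa using finrank_range_le_card (R := Fqm) u
    have h2 : ¬ (Fintype.card (Fin w) = (Set.range u).finrank Fqm) := fun h =>
      hnli (linearIndependent_iff_card_eq_finrank_span.2 h)
    rw [Fintype.card_fin] at h2
    change (Set.range u).finrank Fqm + 1 ≤ w
    omega
  · have h1 : finrank Fq (span Fq (Set.range u)) = w := by
      simpa using finrank_span_eq_card hui
    refine h1.symm.le.trans ?_
    have : FiniteDimensional Fq (span Fq (Set.range g)) :=
      FiniteDimensional.span_of_finite Fq (Set.finite_range g)
    have : FiniteDimensional Fq ↥(span Fq (Set.range g) ⊓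
        (span Fqm (Set.range u)).restrictScalars Fq) :=
      Submodule.finiteDimensional_of_le inf_le_left
    refine Submodule.finrank_mono (span_le.2 ?_)
    rintro _ ⟨t, rfl⟩
    exact ⟨huU t, subset_span ⟨t, rfl⟩⟩

theorem aux_B {n k h : ℕ} (G : Fin k → Fin n → Fqm)
    (W : Submodule Fqm (Fin k → Fqm)) (hW : finrank Fqm W = h)
    (hUW : h + 1 ≤ finrank Fq ↥(span Fq
        (Set.range fun j : Fin n => fun i : Fin k => G i j) ⊓ W.restrictScalars Fq)) :
    ∃ v : Fin n → Fqm, v ≠ 0 ∧ (∀ i, ∑ j, G i j * v j = 0) ∧ rankWeight Fq Fqm v ≤ h + 1 := by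
  let g : Fin n → Fin k → Fqm := fun j i => G i j
  obtain ⟨u', hu'⟩ := exists_linearIndependent_of_le_finrank hUW
  let u : Fin (h + 1) → Fin k → Fqm := fun t => (u' t : Fin k → Fqm)
  have hui : LinearIndependent Fq u :=
    hu'.map' (Submodule.subtype _) (Submodule.ker_subtype _)
  have hM : ∀ t, ∃ c : Fin n → Fq, ∑ j, c j • g j = u t := fun t =>
    (Submodule.mem_span_range_iff_exists_fun Fq).1 (u' t).2.1
  choose M hM using hM
  have hnli : ¬ LinearIndependent Fqm u := by
    intro hl
    have h1 : finrank Fqm (span Fqm (Set.range u)) = h + 1 := by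
      simpa using finrank_span_eq_card hl
    have h2 : span Fqm (Set.range u) ≤ W := by
      rw [span_le]
      rintro _ ⟨t, rfl⟩
      exact (u' t).2.2
    have := Submodule.finrank_mono h2
    omega
  rw [Fintype.linearIndependent_iff] at hnli
  push Not at hnli
  obtain ⟨a, ha, t0, ht0⟩ := hnli
  have hMi : LinearIndependent Fq M := by
    rw [Fintype.linearIndependent_iff] at hui ⊢
    intro c hc
    apply hui
    have : ∑ t, c t • u t = ∑ j, (∑ t, c t • M t) j • g j := by
      simp only [← hM, Finset.smul_sum, Finset.sum_apply, Finset.sum_smul, smul_smul,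
        Pi.smul_apply, smul_eq_mul]
      exact Finset.sum_comm
    rw [this, hc]; simp
  have hinj : LinearMap.ker (Fintype.linearCombination Fq M) = ⊥ :=
    by
    refine LinearMap.ker_eq_bot'.2 fun c hc => funext ?_
    exact (Fintype.linearIndependent_iff.1 hMi) c (by simpa [Fintype.linearCombination_apply] using hc)
  obtain ⟨L, hL⟩ := LinearMap.exists_leftInverse_of_injective _ hinj
  have hLM : ∀ s t, ∑ j, M s j * L (Pi.single j 1) t = if s = t then 1 else 0 := by
    intro s t
    have h1 : L (M s) = Pi.single s 1 := by
      have := LinearMap.congr_fun hL (Pi.single s 1)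
      simpa using this
    have h2 : M s = ∑ j, M s j • (Pi.single j 1 : Fin n → Fq) := by
      funext i
      simp [Finset.sum_apply, Pi.single_apply]
    have h3 := congrFun h1 t
    rw [h2, map_sum] at h3
    simp only [map_smul, Finset.sum_apply, Pi.smul_apply, smul_eq_mul] at h3
    rw [h3, Pi.single_apply]
    simp only [eq_comm]
  let v : Fin n → Fqm := fun j => ∑ t, M t j • a t
  refine ⟨v, ?_, ?_, ?_⟩
  · intro hv
    apply ht0
    have h1 : ∑ j, (L (Pi.single j 1) t0) • v j = a t0 := by
      simp only [v, Finset.smul_sum, smul_smul]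
      rw [Finset.sum_comm]
      have : ∀ s, ∑ j, (L (Pi.single j 1) t0 * M s j) • a s = (if s = t0 then 1 else 0 : Fq) • a s := by
        intro s
        rw [← hLM s t0, Finset.sum_smul]
        exact Finset.sum_congr rfl fun j _ => by rw [mul_comm]
      simp [this]
    rw [← h1, hv]; simp
  · intro i
    have h1 := congrFun ha i
    rw [Pi.zero_apply] at h1
    rw [← h1]
    simp only [← hM, v, g, Finset.sum_apply, Pi.smul_apply, smul_eq_mul, Finset.mul_sum,
      Algebra.smul_def, Pi.mul_apply, Pi.algebraMap_apply]
    rw [Finset.sum_comm]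
    refine Finset.sum_congr rfl fun j _ => Finset.sum_congr rfl fun t _ => ?_
    simp only [Algebra.algebraMap_self, RingHom.id_apply]
    ring
  · unfold rankWeight
    have : FiniteDimensional Fq (span Fq (Set.range a)) :=
      FiniteDimensional.span_of_finite Fq (Set.finite_range a)
    have h1 : finrank Fq (span Fq (Set.range a)) ≤ h + 1 := by
      have := finrank_range_le_card (R := Fq) a
      rwa [Fintype.card_fin] at this
    refine le_trans (Submodule.finrank_mono (span_le.2 ?_)) h1
    rintro _ ⟨j, rfl⟩
    exact Submodule.sum_mem _ fun t _ => Submodule.smul_mem _ _ (subset_span ⟨t, rfl⟩)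

theorem aux_arith (n k m : ℕ) (hn : 0 < n) :
    (m : ℤ) - ⌈(((n : ℚ) - k) * m) / n⌉ = ⌊((k : ℚ) * m) / n⌋ := by
  have hn' : (n : ℚ) ≠ 0 := by positivity
  have : (((n : ℚ) - k) * m) / n = -((k : ℚ) * m / n) + (m : ℤ) := by
    push_cast; field_simp; ring
  rw [this, Int.ceil_add_intCast, Int.ceil_neg]
  ring

/-- `U` is `h`-scattered iff `Rdef(C^⊥) ≤ ⌊km/n⌋ - h - 1`. -/
theorem stmt18 [Fintype Fq] (n k m h : ℕ) (hm : finrank Fq Fqm = m)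
    (hk1 : 1 ≤ k) (hkn : k < n) (hhk : h < k)
    (C : Submodule Fqm (Fin n → Fqm)) (hdim : finrank Fqm ↥C = k)
    (hnd : IsNondegenerate Fq Fqm k C)
    (U : Submodule Fq (Fin k → Fqm)) (hU : IsAssociatedSystem Fq Fqm C U) :
    IsEvasive Fq Fqm U h h ↔
      (m : ℤ) - ⌈(((n : ℚ) - k) * m) / n⌉ - (minRankDist Fq Fqm (dualCode Fqm C) : ℤ) + 1
        ≤ ⌊((k : ℚ) * m) / n⌋ - h - 1 := by
  have harith := aux_arith n k m (by omega)
  have hred : ((m : ℤ) - ⌈(((n : ℚ) - k) * m) / n⌉ - (minRankDist Fq Fqm (dualCode Fqm C) : ℤ) + 1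
        ≤ ⌊((k : ℚ) * m) / n⌋ - h - 1) ↔ h + 2 ≤ minRankDist Fq Fqm (dualCode Fqm C) := by
    rw [harith]; omega
  rw [hred]
  obtain ⟨G, hG, rfl⟩ := hU
  obtain ⟨G', hG', hfr⟩ := hnd
  have hind' : LinearIndependent Fq (fun j : Fin n => fun i : Fin k => G' i j) := by
    rw [linearIndependent_iff_card_eq_finrank_span, Fintype.card_fin]
    exact hfr.symm
  have hind : LinearIndependent Fq (fun j : Fin n => fun i : Fin k => G i j) := by
    rw [aux_indep_iff] at hind' ⊢
    intro x hx
    exact hind' x ((aux_gen Fqm C G' hG' _).1 ((aux_gen Fqm C G hG _).2 hx))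
  have hdual : ∀ v, v ∈ dualCode Fqm C ↔ ∀ i, ∑ j, G i j * v j = 0 := fun v =>
    aux_gen Fqm C G hG v
  have hfd : FiniteDimensional Fq (span Fq (Set.range fun j : Fin n => fun i : Fin k => G i j)) :=
    FiniteDimensional.span_of_finite Fq (Set.finite_range _)
  have hspan : span Fqm (span Fq (Set.range fun j : Fin n => fun i : Fin k => G i j) :
      Set (Fin k → Fqm)) = ⊤ := by
    rw [Submodule.span_span_of_tower]
    apply Submodule.eq_top_of_finrank_eq
    have h1 := Matrix.rank_eq_finrank_span_cols (Matrix.of G)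
    have h2 := Matrix.rank_eq_finrank_span_row (Matrix.of G)
    have h3 : finrank Fqm (span Fqm (Set.range G)) = k := by
      have hG2 : C = span Fqm (Set.range G) := hG
      exact (hG2 ▸ hdim :)
    simp only [finrank_fin_fun]
    exact h1.symm.trans (h2.trans h3)
  constructor
  · intro hev
    have hne : {w : ℕ | ∃ v ∈ dualCode Fqm C, v ≠ 0 ∧ rankWeight Fq Fqm v = w}.Nonempty := by
      have hker : LinearMap.ker (Matrix.mulVecLin (Matrix.of G)) ≠ ⊥ :=
        LinearMap.ker_ne_bot_of_finrank_lt (by simpa using hkn)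
      obtain ⟨v, hv, hv0⟩ := Submodule.exists_mem_ne_zero_of_ne_bot hker
      refine ⟨_, v, (hdual v).2 fun i => ?_, hv0, rfl⟩
      exact congrFun (LinearMap.mem_ker.1 hv) i
    obtain ⟨v, hv, hv0, hvw⟩ := Nat.sInf_mem hne
    change rankWeight Fq Fqm v = minRankDist Fq Fqm (dualCode Fqm C) at hvw
    rw [← hvw]
    by_contra hlt
    obtain ⟨a, W, haw, hWa, hle⟩ := aux_A Fq Fqm G hind v hv0 ((hdual v).1 hv)
    obtain ⟨W', hW', hbig⟩ := aux_step Fq Fqm _ hspan a W hWa (haw.trans hle) h (by omega) (by omega)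
    have := hev W' hW'
    omega
  · intro hd W hW
    by_contra hlt
    obtain ⟨v, hv0, hv, hvw⟩ := aux_B Fq Fqm G W hW (by omega)
    have : minRankDist Fq Fqm (dualCode Fqm C) ≤ rankWeight Fq Fqm v :=
      Nat.sInf_le ⟨v, (hdual v).2 hv, hv0, rfl⟩
    omega
end
end
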